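/- Let Z = (S_Z, m_Z) and P = (S_P, m_P) be disjoint multisets contained in the strip 21/40 < Re s < 1 such that the set S_Z ∪ S_P has no accumulation points in ℂ off the line Re s = 21/40. Then there exists a completely multiplicative function χ : ℕ → {1, e^{2πi/3}, e^{-2πi/3}} and a meromorphic function F on the half-plane Re s > 21/40 such that F(s) = ζ_χ(s) = ∑_{n=1}^∞ χ(n) n^{-s} for Re s > 1, the zeros of F in the half-plane Re s > 21/40 are exactly the points of S_Z with the zero at s having multiplicity m_Z(s), and the poles of F are exactly the points of S_P with the pole at s having order m_P(s). -/

import Mathlib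

/-!
The function `F` is built first, as a Weierstrass type product `M` times a nowhere vanishing
holomorphic factor, in such a way that `M` is visibly close to an Euler product.

**Factors.** For a prescribed point `ρ` put `z = 1 / (1 + s - ρ)`. The factor
`E_ρ(s) = (1 - z) exp (∑_{k < q} z ^ k / k)` has a simple zero at `ρ`, no other zero in the
half-plane considered, and equals `exp (-logTail q z)` when `‖z‖ < 1`, in particular for
`Re s > Re ρ`. There `logTail q z` is the Laplace transform
`∫_{v > 0} e^{(ρ - 1) v} tailDensity q v e^{-s v} dv` (`tailDensity_laplace`), whose density is
`O(e^{Re ρ · v})` with `Re ρ < 1` and is as small as desired on bounded sets when `q` is large.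

**Quantization.** Such a Laplace transform is turned into a Dirichlet series over primes. For `v` in
the block `[j log 16, (j + 1) log 16]` the exponential `e^{-s v}` is replaced by its Lagrange
interpolant at nodes `log p`. With `n` nodes, a small multiple of `j` in number, spread over
`n / m` blocks with `m` fixed and large, the error on `‖s‖ ≤ R` beats every fixed exponential
in `j`, and the Lagrange basis polynomials are at most `e^{δ j}` (`interp_error`,
`lagrange_bound`). By the Chebyshev bounds there are about `16 ^ j / j` disjoint sets of nodes of
this kind (`node_primes`); averaging over all of them makes the weight of each single prime at
most `e^{-(1 - δ) v}` (`kernel_fixed`, `kernels`). Integrating against the density gives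
`logTail q z = ∑ a_p p^{-s} + e(s)` for `Re s > 1`, with `e` entire and with `a_p` and `e`
arbitrarily small (`laplace_quantize`, `point_factor`). This needs only `Re ρ < 1`.

**Product.** With signed multiplicities `n_ρ` (positive at zeros, negative at poles), the product
`M` of the `(E_ρ exp (e_ρ)) ^ n_ρ` converges locally uniformly away from its poles, has exactly the
prescribed divisor, and equals `exp (∑ A_p p^{-s})` for `Re s > 1`, where `‖A_p‖ ≤ 1 / 4`
(`canonical_product`).

**Character.** The cube roots of unity are spread widely enough that `χ(p)` can be chosen greedily so
that the partial sums of `χ(p) - A_p` stay bounded (`greedy`). Abel summation then extends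
`∑ (χ(p) - A_p) p^{-s}` holomorphically to `Re s > 0`, and the terms of the Euler product that
involve higher prime powers are holomorphic on `Re s > 1 / 2`. Hence `ζ_χ = M exp H` with `H`
holomorphic on `Re s > 1 / 2` (`euler_extension`), and `F = M exp H` is the required continuation.
-/

open Complex Filter Set

/-- A completely multiplicative function: `χ 1 = 1` and `χ (m*n) = χ m * χ n`. -/
def CompletelyMultiplicative (χ : ℕ → ℂ) : Prop :=
  χ 1 = 1 ∧ ∀ m n : ℕ, χ (m * n) = χ m * χ n

/-- The Helson zeta function `ζ_χ(s) = ∑_{n ≥ 1} χ(n) n^{-s}`. -/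
noncomputable def helsonZeta (χ : ℕ → ℂ) (s : ℂ) : ℂ :=
  ∑' n : ℕ, χ (n + 1) * ((n : ℂ) + 1) ^ (-s)

/-- `F` has a zero of multiplicity `k` at `s`. -/
def ZeroOfOrder (F : ℂ → ℂ) (s : ℂ) (k : ℕ) : Prop :=
  ∃ g : ℂ → ℂ, AnalyticAt ℂ g s ∧ g s ≠ 0 ∧ ∀ᶠ z in nhds s, F z = (z - s) ^ k * g z

/-- `F` has a pole of order `k` at `s`. -/
def PoleOfOrder (F : ℂ → ℂ) (s : ℂ) (k : ℕ) : Prop :=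
  ∃ g : ℂ → ℂ, AnalyticAt ℂ g s ∧ g s ≠ 0 ∧
    ∀ᶠ z in nhdsWithin s {s}ᶜ, F z = (z - s) ^ (-(k : ℤ)) * g z

/-! ### Primes in blocks -/

/-- The Chebyshev bounds give at least `16 ^ b / (b + 1)` primes in `[16 ^ b, 16 ^ (b + 1))` for large
`b`. The ratio `16` leaves room between the two Chebyshev constants. -/
theorem cheb_block : ∀ᶠ b : ℕ in atTop,
    16 ^ b + (b + 1) * Nat.primeCounting' (16 ^ b) ≤
      (b + 1) * Nat.primeCounting' (16 ^ (b + 1)) := by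
  have hl2 : 0 < Real.log 2 := Real.log_pos (by norm_num)
  have h1 := Chebyshev.eventually_primeCounting_le hl2
  have ht : Tendsto (fun b : ℕ => ((16 : ℝ)) ^ b) atTop atTop :=
    tendsto_pow_atTop_atTop_of_one_lt (by norm_num)
  filter_upwards [ht.eventually h1, eventually_ge_atTop 1] with b hb hb1
  have hb1' : (1 : ℝ) ≤ b := by exact_mod_cast hb1
  have hlog16 : Real.log 16 = 4 * Real.log 2 := by
    rw [show (16 : ℝ) = 2 ^ 4 by norm_num, Real.log_pow]; norm_num
  have hlog4 : Real.log 4 = 2 * Real.log 2 := by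
    rw [show (4 : ℝ) = 2 ^ 2 by norm_num, Real.log_pow]; norm_num
  have hfl : ⌊((16 : ℝ)) ^ b⌋₊ = 16 ^ b := by
    have : ((16 : ℝ)) ^ b = ((16 ^ b : ℕ) : ℝ) := by push_cast; rfl
    rw [this, Nat.floor_natCast]
  rw [hfl, Real.log_pow, hlog16, hlog4] at hb
  have h2 := Chebyshev.pi_ge (16 ^ (b + 1))
  have hN : (16 : ℝ) ^ (b+1) = 16 * 16 ^ b := by ring
  have hbig : (b : ℝ) + 1 ≤ 16 ^ b / 2 := by
    have h : ∀ n : ℕ, 1 ≤ n → (n : ℝ) + 1 ≤ 16 ^ n / 2 := by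
      intro n hn
      induction n, hn using Nat.le_induction with
      | base => norm_num
      | succ n hn ih => push_cast; rw [pow_succ]; nlinarith
    exact h b hb1
  push_cast at h2
  rw [Real.log_pow, hlog16] at h2
  have h3 : Real.log ((16 : ℝ) ^ (b + 1) + 1) ≤ 2 * ((b + 1) * (4 * Real.log 2)) := by
    have : Real.log ((16 : ℝ) ^ (b + 1) + 1) ≤ Real.log (((16 : ℝ) ^ (b + 1)) ^ 2) := by
      apply Real.log_le_log (by positivity)
      have : (16 : ℝ) ≤ 16 ^ (b + 1) := by
        rw [hN]; have : (1:ℝ) ≤ 16 ^ b := one_le_pow₀ (by norm_num)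
        linarith
      nlinarith
    refine this.trans (le_of_eq ?_)
    rw [Real.log_pow, Real.log_pow, hlog16]; push_cast; ring
  have h4 : (16 : ℝ) ^ (b + 1) / (4 * (b + 1)) - 2 ≤ Nat.primeCounting (16 ^ (b + 1)) := by
    refine le_trans ?_ h2
    rw [le_div_iff₀ (by push_cast; positivity)]
    push_cast
    have : ((16 : ℝ) ^ (b + 1) / (4 * (b + 1)) - 2) * ((b + 1) * (4 * Real.log 2))
        = 16 ^ (b+1) * Real.log 2 - 2 * ((b + 1) * (4 * Real.log 2)) := by
      field_simp
    linarith
  have h5 : (Nat.primeCounting (16 ^ b) : ℝ) ≤ 3 * 16 ^ b / (4 * b) := by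
    refine hb.trans (le_of_eq ?_)
    field_simp; ring
  have h6 : Nat.primeCounting' (16 ^ b) ≤ Nat.primeCounting (16 ^ b) :=
    Nat.monotone_primeCounting' (Nat.le_succ _)
  have h7 : Nat.primeCounting (16 ^ (b+1)) ≤ Nat.primeCounting' (16 ^ (b + 1)) + 1 := by
    rw [Nat.primeCounting, Nat.primeCounting', Nat.count_succ]; split_ifs <;> simp
  have h6' : (Nat.primeCounting' (16 ^ b) : ℝ) ≤ Nat.primeCounting (16 ^ b) := by exact_mod_cast h6
  have h7' : (Nat.primeCounting (16 ^ (b+1)) : ℝ) ≤ Nat.primeCounting' (16 ^ (b + 1)) + 1 := by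
    exact_mod_cast h7
  have goal : (16 : ℝ) ^ b + (b + 1) * Nat.primeCounting' (16 ^ b) ≤
      (b + 1) * Nat.primeCounting' (16 ^ (b + 1)) := by
    have e1 : ((b : ℝ) + 1) * (16 ^ (b + 1) / (4 * (b + 1)) - 2) = 4 * 16 ^ b - 2 * (b + 1) := by
      rw [hN]; field_simp; ring
    have e2 : ((b : ℝ) + 1) * (3 * 16 ^ b / (4 * b)) ≤ 3 / 2 * 16 ^ b := by
      rw [← mul_div_assoc, div_le_iff₀ (by positivity)]
      have : (0:ℝ) < 16 ^ b := by positivity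
      nlinarith
    have hb0 : (0:ℝ) ≤ b + 1 := by positivity
    have f1 := mul_le_mul_of_nonneg_left (h4.trans h7') hb0
    have f2 := mul_le_mul_of_nonneg_left (h6'.trans h5) hb0
    nlinarith
  exact_mod_cast goal

/-! ### Lagrange interpolation of exponentials -/

theorem exp_sub_sum_le {x : ℝ} (hx : 0 ≤ x) (n : ℕ) :
    Real.exp x - ∑ i ∈ Finset.range n, x ^ i / i.factorial ≤ x ^ n / n.factorial * Real.exp x := by
  have hs : HasSum (fun i : ℕ => x ^ i / i.factorial) (Real.exp x) := by
    rw [Real.exp_eq_exp_ℝ]; exact NormedSpace.expSeries_div_hasSum_exp x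
  have h1 := (hasSum_nat_add_iff' n).mpr hs
  refine hasSum_le (fun k => ?_) h1 (hs.mul_left (x ^ n / n.factorial))
  rw [div_mul_div_comm, ← pow_add, add_comm n k]
  gcongr
  have := Nat.le_of_dvd (Nat.factorial_pos _) (Nat.factorial_mul_factorial_dvd_factorial_add n k)
  rw [add_comm k n]
  exact_mod_cast this

/-- Error of Lagrange interpolation of `v ↦ e^{-w v}` at the nodes `x i`, all in the window of radius
`W` about `c`. Interpolation reproduces the Taylor polynomial about `c` of degree `< s.card` exactly,
so that only the Taylor remainders at `v` and at the nodes contribute. -/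
theorem interp_error {ι : Type*} [DecidableEq ι] (s : Finset ι) (x : ι → ℝ)
    (hinj : Set.InjOn x s) {c W R Λ v : ℝ} (hR : 0 ≤ R) (hΛ : 0 ≤ Λ)
    (hx : ∀ i ∈ s, |x i - c| ≤ W) (hv : |v - c| ≤ W)
    (hl : ∀ i ∈ s, |(Lagrange.basis s x i).eval v| ≤ Λ) (w : ℂ) (hw : ‖w‖ ≤ R) :
    ‖cexp (-w * v) - ∑ i ∈ s, ((Lagrange.basis s x i).eval v : ℝ) * cexp (-w * x i)‖ ≤
      Real.exp (R * |c|) * ((1 + s.card * Λ) *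
        ((R * W) ^ s.card / s.card.factorial * Real.exp (R * W))) := by
  classical
  set n := s.card with hn
  have hmono : ∀ k < n, ∑ i ∈ s, (Lagrange.basis s x i).eval v * (x i - c) ^ k = (v - c) ^ k := by
    intro k hk
    have hdeg : ((Polynomial.X - Polynomial.C c) ^ k : Polynomial ℝ).degree < s.card := by
      rw [Polynomial.degree_pow, Polynomial.degree_X_sub_C]
      simpa using hk
    have h := Lagrange.eq_interpolate hinj hdeg
    have h2 := congrArg (Polynomial.eval v) h
    rw [Lagrange.interpolate_apply, Polynomial.eval_finsetSum] at h2
    simp only [Polynomial.eval_mul, Polynomial.eval_C, Polynomial.eval_pow, Polynomial.eval_sub,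
      Polynomial.eval_X] at h2
    rw [h2]
    exact Finset.sum_congr rfl fun i _ => mul_comm _ _
  set rem : ℝ → ℂ := fun y => cexp (-w * (y - c : ℝ)) -
    ∑ k ∈ Finset.range n, (-w * (y - c : ℝ)) ^ k / k.factorial with hrem
  have hW : 0 ≤ W := (abs_nonneg _).trans hv
  set M : ℝ := (R * W) ^ n / n.factorial * Real.exp (R * W) with hM
  have hM0 : 0 ≤ M := by positivity
  have hremle : ∀ y : ℝ, |y - c| ≤ W → ‖rem y‖ ≤ M := by
    intro y hy
    have hnorm : ‖-w * (y - c : ℝ)‖ ≤ R * W := by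
      rw [norm_mul, norm_neg, Complex.norm_real, Real.norm_eq_abs]
      exact mul_le_mul hw hy (abs_nonneg _) hR
    calc ‖rem y‖ ≤ _ := norm_exp_sub_sum_le_exp_norm_sub_sum _ _
      _ ≤ _ := exp_sub_sum_le (norm_nonneg _) n
      _ ≤ M := by rw [hM]; gcongr
  have hfac : ∀ y : ℝ, cexp (-w * y) = cexp (-w * c) *
      (rem y + ∑ k ∈ Finset.range n, (-w * (y - c : ℝ)) ^ k / k.factorial) := by
    intro y
    simp only [hrem, sub_add_cancel]
    rw [← Complex.exp_add]; congr 1; push_cast; ring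
  have hsumpoly : ∑ i ∈ s, (((Lagrange.basis s x i).eval v : ℝ) : ℂ) *
      ∑ k ∈ Finset.range n, (-w * (x i - c : ℝ)) ^ k / k.factorial =
      ∑ k ∈ Finset.range n, (-w * (v - c : ℝ)) ^ k / k.factorial := by
    simp_rw [Finset.mul_sum]
    rw [Finset.sum_comm]
    refine Finset.sum_congr rfl fun k hk => ?_
    rw [mul_pow, ← Complex.ofReal_pow, ← hmono k (Finset.mem_range.mp hk)]
    push_cast
    rw [Finset.mul_sum, Finset.sum_div]
    refine Finset.sum_congr rfl fun i _ => ?_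
    rw [mul_pow]
    ring
  have key : cexp (-w * v) - ∑ i ∈ s, ((Lagrange.basis s x i).eval v : ℝ) * cexp (-w * x i) =
      cexp (-w * c) * (rem v - ∑ i ∈ s, ((Lagrange.basis s x i).eval v : ℝ) * rem (x i)) := by
    have hx' : ∑ i ∈ s, (((Lagrange.basis s x i).eval v : ℝ) : ℂ) * cexp (-w * x i) =
        ∑ i ∈ s, (((Lagrange.basis s x i).eval v : ℝ) : ℂ) * (cexp (-w * c) *
      (rem (x i) + ∑ k ∈ Finset.range n, (-w * (x i - c : ℝ)) ^ k / k.factorial)) :=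
      Finset.sum_congr rfl fun i _ => by rw [← hfac]
    rw [hx', hfac v]
    have : ∑ i ∈ s, (((Lagrange.basis s x i).eval v : ℝ) : ℂ) * (cexp (-w * c) *
      (rem (x i) + ∑ k ∈ Finset.range n, (-w * (x i - c : ℝ)) ^ k / k.factorial)) =
      cexp (-w * c) * (∑ i ∈ s, ((Lagrange.basis s x i).eval v : ℝ) * rem (x i) +
        ∑ i ∈ s, (((Lagrange.basis s x i).eval v : ℝ) : ℂ) *
      ∑ k ∈ Finset.range n, (-w * (x i - c : ℝ)) ^ k / k.factorial) := by
      rw [← Finset.sum_add_distrib, Finset.mul_sum]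
      exact Finset.sum_congr rfl fun i _ => by ring
    rw [this, hsumpoly]; ring
  rw [key, norm_mul]
  have h1 : ‖cexp (-w * c)‖ ≤ Real.exp (R * |c|) := by
    refine (Complex.norm_exp_le_exp_norm _).trans (Real.exp_le_exp.mpr ?_)
    rw [norm_mul, norm_neg, Complex.norm_real, Real.norm_eq_abs]
    exact mul_le_mul_of_nonneg_right hw (abs_nonneg _)
  have h2 : ‖rem v - ∑ i ∈ s, ((Lagrange.basis s x i).eval v : ℝ) * rem (x i)‖ ≤
      (1 + n * Λ) * M := by
    refine (norm_sub_le _ _).trans ?_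
    have : ‖∑ i ∈ s, (((Lagrange.basis s x i).eval v : ℝ) : ℂ) * rem (x i)‖ ≤ n * (Λ * M) := by
      refine (norm_sum_le _ _).trans ?_
      rw [hn, ← nsmul_eq_mul]
      refine Finset.sum_le_card_nsmul _ _ _ fun i hi => ?_
      rw [norm_mul, Complex.norm_real, Real.norm_eq_abs]
      exact mul_le_mul (hl i hi) (hremle _ (hx i hi)) (norm_nonneg _) hΛ
    have := hremle v hv
    linarith
  exact mul_le_mul h1 h2 (norm_nonneg _) (Real.exp_pos _).le

theorem prod_dist (w r : ℕ) :
    ∏ u ∈ Finset.range (w + 1 + r), (if u = w then (1 : ℝ) else |(u : ℝ) - w|) =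
      w.factorial * r.factorial := by
  rw [Finset.prod_range_add, Finset.prod_range_succ, if_pos rfl, mul_one]
  congr 1
  · rw [← Finset.prod_range_reflect, ← Finset.prod_range_add_one_eq_factorial]
    push_cast
    refine Finset.prod_congr rfl fun i hi => ?_
    have hi := Finset.mem_range.mp hi
    rw [if_neg (by omega), abs_sub_comm, abs_of_nonneg] <;>
      rw [Nat.cast_sub (by omega), Nat.cast_sub (by omega)] <;> push_cast <;> linarith [(Nat.cast_nonneg i : (0:ℝ) ≤ i)]
  · rw [← Finset.prod_range_add_one_eq_factorial]
    push_cast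
    refine Finset.prod_congr rfl fun i hi => ?_
    rw [if_neg (by omega), abs_of_nonneg] <;> linarith [(Nat.cast_nonneg i : (0:ℝ) ≤ i)]

/-- Size of the Lagrange basis polynomials for `ℓ` clusters of `m` nodes, where distinct clusters `u`,
`w` are at distance at least `β |u - w|` and nodes of one cluster at distance at least `d`. The
cluster distances multiply to factorials, which compensate the power `(2 ℓ β) ^ (ℓ m)` in the
numerators up to an exponential. -/
theorem lagrange_bound (ℓ m : ℕ) (x : ℕ × ℕ → ℝ) {β d v : ℝ} (hβ : 1 ≤ β) (hd : 0 < d) (hd1 : d ≤ 1)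
    (hsame : ∀ u < ℓ, ∀ r < m, ∀ r' < m, r ≠ r' → d ≤ |x (u, r) - x (u, r')|)
    (hdiff : ∀ u < ℓ, ∀ u' < ℓ, ∀ r < m, ∀ r' < m, u ≠ u' →
      β * |(u' : ℝ) - u| ≤ |x (u, r) - x (u', r')|)
    (hv : ∀ u < ℓ, ∀ r < m, |v - x (u, r)| ≤ 2 * ℓ * β) (i : ℕ × ℕ)
    (hi : i ∈ Finset.range ℓ ×ˢ Finset.range m) :
    |(Lagrange.basis (Finset.range ℓ ×ˢ Finset.range m) x i).eval v| ≤
      (β * ℓ / d * (4 * Real.exp 1) ^ ℓ) ^ m := by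
  obtain ⟨w, q⟩ := i
  obtain ⟨hw, hq⟩ := Finset.mem_product.mp hi
  simp only [Finset.mem_range] at hw hq
  set s := Finset.range ℓ ×ˢ Finset.range m with hs
  set W : ℝ := 2 * ℓ * β with hWdef
  have hℓ : (1 : ℝ) ≤ ℓ := by exact_mod_cast (by omega : 1 ≤ ℓ)
  have hW1 : 1 ≤ W := by rw [hWdef]; nlinarith
  set lo : ℕ → ℝ := fun u => if u = w then d else β * |(u : ℝ) - w| with hlo
  have hlopos : ∀ u, 0 < lo u := by
    intro u; simp only [hlo]; split_ifs with h
    · exact hd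
    · have : (u : ℝ) - w ≠ 0 := sub_ne_zero.mpr (by exact_mod_cast h)
      positivity
  have hlo_le : ∀ k ∈ s.erase (w, q), lo k.1 ≤ |x (w, q) - x k| := by
    rintro ⟨u, r⟩ hk
    obtain ⟨hk1, hk2⟩ := Finset.mem_erase.mp hk
    obtain ⟨hu, hr⟩ := Finset.mem_product.mp hk2
    simp only [Finset.mem_range] at hu hr
    simp only [hlo]; split_ifs with h
    · subst h
      exact hsame u hw q hq r hr (fun h => hk1 (by rw [h]))
    · exact hdiff w hw u hu q hq r hr (fun h' => h h'.symm)
  have h1 : |(Lagrange.basis s x (w, q)).eval v| ≤ ∏ k ∈ s.erase (w, q), W / lo k.1 := by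
    rw [Lagrange.basis, Polynomial.eval_prod, Finset.abs_prod]
    refine Finset.prod_le_prod (fun _ _ => abs_nonneg _) fun k hk => ?_
    simp only [Lagrange.basisDivisor, Polynomial.eval_mul, Polynomial.eval_C, Polynomial.eval_sub,
      Polynomial.eval_X, abs_mul, abs_inv]
    rw [inv_mul_eq_div]
    have hk2 := Finset.mem_product.mp (Finset.mem_erase.mp hk).2
    simp only [Finset.mem_range] at hk2
    exact div_le_div₀ (by linarith) (hv k.1 hk2.1 k.2 hk2.2) (hlopos _) (hlo_le k hk)
  have h2 : ∏ k ∈ s.erase (w, q), W / lo k.1 ≤ ∏ k ∈ s, W / lo k.1 := by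
    rw [← Finset.mul_prod_erase s _ hi]
    refine le_mul_of_one_le_left (Finset.prod_nonneg fun k _ => ?_) ?_
    · have := hlopos k.1; positivity
    · simp only [hlo, if_true]; rw [le_div_iff₀ hd]; linarith
  have h3 : ∏ k ∈ s, W / lo k.1 = (W ^ ℓ / ∏ u ∈ Finset.range ℓ, lo u) ^ m := by
    rw [hs, Finset.prod_product]
    simp only [Finset.prod_const, Finset.card_range]
    rw [Finset.prod_pow, Finset.prod_div_distrib]; simp
  obtain ⟨r, hr⟩ : ∃ r, ℓ = w + 1 + r := ⟨ℓ - (w + 1), by omega⟩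
  have h4 : ∏ u ∈ Finset.range ℓ, lo u = d * β ^ (w + r) * (w.factorial * r.factorial) := by
    rw [← prod_dist w r, ← hr]
    have : ∀ u ∈ Finset.range ℓ, lo u = (if u = w then d else β) *
        (if u = w then (1 : ℝ) else |(u : ℝ) - w|) := by
      intro u _; simp only [hlo]; split_ifs <;> simp
    rw [Finset.prod_congr rfl this, Finset.prod_mul_distrib]
    congr 1
    rw [← Finset.mul_prod_erase _ _ (Finset.mem_range.mpr hw), if_pos rfl]
    congr 1
    rw [Finset.prod_congr rfl (g := fun _ => β)
      (fun u hu => if_neg (Finset.ne_of_mem_erase hu)), Finset.prod_const,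
      Finset.card_erase_of_mem (Finset.mem_range.mpr hw), Finset.card_range]
    congr 1; omega
  refine h1.trans (h2.trans (h3.le.trans ?_))
  have hbase : W ^ ℓ / ∏ u ∈ Finset.range ℓ, lo u ≤ β * ℓ / d * (4 * Real.exp 1) ^ ℓ := by
    rw [h4, div_le_iff₀ (by positivity)]
    have hchoose : ((w + r).factorial : ℝ) ≤ 2 ^ (w + r) * (w.factorial * r.factorial) := by
      have := Nat.add_choose_mul_factorial_mul_factorial w r
      have h2 : (w + r).choose r ≤ 2 ^ (w + r) := Nat.choose_le_two_pow _ _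
      have : (w + r).factorial ≤ 2 ^ (w + r) * (w.factorial * r.factorial) := by
        rw [← this, mul_assoc]; exact Nat.mul_le_mul_right _ h2
      exact_mod_cast this
    have hexp : (ℓ : ℝ) ^ ℓ ≤ ℓ * (w + r).factorial * Real.exp 1 ^ ℓ := by
      have h := Real.pow_div_factorial_le_exp (ℓ : ℝ) (by positivity) ℓ
      rw [div_le_iff₀ (by positivity)] at h
      have hf : (ℓ.factorial : ℝ) = ℓ * (w + r).factorial := by
        rw [show ℓ = (w + r) + 1 by omega, Nat.factorial_succ]; push_cast; ring
      rw [hf] at h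
      rw [← Real.exp_nat_mul]; simp only [mul_one]; linarith
    have hβpow : β ^ ℓ = β * β ^ (w + r) := by
      rw [← pow_succ']; congr 1; omega
    have h2pow : (2:ℝ) ^ (w + r) ≤ 2 ^ ℓ := pow_le_pow_right₀ (by norm_num) (by omega)
    calc W ^ ℓ = 2 ^ ℓ * (β * β ^ (w + r)) * (ℓ : ℝ) ^ ℓ := by
          rw [hWdef, mul_pow, mul_pow, hβpow]; ring
      _ ≤ 2 ^ ℓ * (β * β ^ (w + r)) * (ℓ * (2 ^ ℓ * (w.factorial * r.factorial)) *
            Real.exp 1 ^ ℓ) := by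
          gcongr
          refine hexp.trans ?_
          gcongr
          refine hchoose.trans ?_
          gcongr
      _ = _ := by
          rw [mul_pow, show (4:ℝ) = 2 * 2 by norm_num, mul_pow]; field_simp
  refine pow_le_pow_left₀ ?_ hbase m
  rw [h4]; positivity

/-! ### Exponentials averaged over primes -/

/-- There are `T`, of order at least `16 ^ j / (j m)`, pairwise disjoint sets of prime nodes
`N t (u, r)`, `u < ℓ`, `r < m`. The cluster `u` lies in `[16 ^ (j + 2 u), 16 ^ (j + 2 u + 1))`, so that
clusters are separated by empty blocks, and its `m` primes are well spaced because their indices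
in the sequence of primes are. -/
theorem node_primes (m : ℕ) (hm : 1 ≤ m) : ∀ᶠ j : ℕ in atTop, ∀ ℓ : ℕ, ℓ ≤ j →
    ∃ (T : ℕ) (N : ℕ → ℕ × ℕ → ℕ), 1 ≤ T ∧ (16 : ℝ) ^ j ≤ 2 * ((3 * j + 1) * m) * T ∧
      (∀ t i, (N t i).Prime) ∧
      (∀ t < T, ∀ u < ℓ, ∀ r < m, 16 ^ (j + 2 * u) ≤ N t (u, r) ∧
        N t (u, r) < 16 ^ (j + 2 * u + 1)) ∧
      (∀ t < T, ∀ u < ℓ, ∀ r < m, ∀ r' < m, r < r' →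
        (16 : ℝ) ^ (j + 2 * u) / (2 * ((3 * j + 1) * m)) ≤ (N t (u, r') : ℝ) - N t (u, r)) ∧
      (∀ t < T, ∀ u < ℓ, ∀ r < m, ∀ t' < T, ∀ u' < ℓ, ∀ r' < m,
        N t (u, r) = N t' (u', r') → t = t' ∧ u = u' ∧ r = r') := by
  obtain ⟨b0, hb0⟩ := eventually_atTop.mp cheb_block
  have hD : ∀ᶠ j : ℕ in atTop, (3 * j + 1) * m ≤ 16 ^ j := by
    have h1 : Tendsto (fun n : ℕ => (n : ℝ) ^ 1 * (1 / 16 : ℝ) ^ n) atTop (nhds 0) :=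
      tendsto_pow_const_mul_const_pow_of_lt_one 1 (by norm_num) (by norm_num)
    filter_upwards [h1.eventually (gt_mem_nhds (show (0 : ℝ) < 1 / (4 * m) by positivity)),
      eventually_ge_atTop 1] with j hj hj1
    have : (j : ℝ) * (4 * m) < 16 ^ j := by
      rw [pow_one, one_div, inv_pow, ← div_eq_mul_inv, div_lt_div_iff₀ (by positivity) (by positivity)] at hj
      linarith
    have : j * (4 * m) < 16 ^ j := by exact_mod_cast this
    nlinarith
  filter_upwards [hD, eventually_ge_atTop b0] with j hD hj ℓ hℓ
  set D := (3 * j + 1) * m with hDdef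
  have hDpos : 0 < D := by positivity
  set S : ℕ → ℕ := fun u => 16 ^ (j + 2 * u) / D with hS
  have hSpos : ∀ u, 1 ≤ S u := fun u => by
    rw [hS]; exact (Nat.one_le_div_iff hDpos).mpr (hD.trans (Nat.pow_le_pow_right (by norm_num) (by omega)))
  have hShalf : ∀ u, 16 ^ (j + 2 * u) ≤ 2 * D * S u := fun u => by
    have h1 := Nat.lt_div_mul_add hDpos (a := 16 ^ (j + 2 * u))
    have h2 := hSpos u
    have h3 : D ≤ S u * D := Nat.le_mul_of_pos_left _ h2
    simp only [hS] at h3 ⊢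
    nlinarith
  have hTS : ∀ u, S 0 ≤ S u := fun u => Nat.div_le_div_right (Nat.pow_le_pow_right (by norm_num) (by omega))
  set N : ℕ → ℕ × ℕ → ℕ := fun t i =>
    Nat.nth Nat.Prime (Nat.primeCounting' (16 ^ (j + 2 * i.1)) + (t + i.2 * S i.1)) with hN
  have hidx : ∀ t < S 0, ∀ u < ℓ, ∀ r < m, Nat.primeCounting' (16 ^ (j + 2 * u)) + (t + r * S u) <
      Nat.primeCounting' (16 ^ (j + 2 * u + 1)) := by
    intro t ht u hu r hr
    have h1 := hb0 (j + 2 * u) (by omega)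
    have h2 : t + r * S u < m * S u := by
      have := hTS u
      calc t + r * S u < S u + r * S u := by omega
        _ = (r + 1) * S u := by ring
        _ ≤ m * S u := Nat.mul_le_mul_right _ hr
    have h3 : (3 * j + 1) * (m * S u) ≤ 16 ^ (j + 2 * u) := by
      have := Nat.div_mul_le_self (16 ^ (j + 2 * u)) D
      simp only [hS]; rw [hDdef] at this ⊢; linarith
    by_contra hcon
    push Not at hcon
    have hbj : j + 2 * u + 1 < 3 * j + 1 := by omega
    have h4 : (j + 2 * u + 1) * (t + r * S u) < (j + 2 * u + 1) * (m * S u) :=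
      Nat.mul_lt_mul_of_pos_left h2 (by omega)
    have h5 : (j + 2 * u + 1) * (m * S u) ≤ (3 * j + 1) * (m * S u) := Nat.mul_le_mul_right _ hbj.le
    have h6 := Nat.mul_le_mul_left (j + 2 * u + 1) hcon
    rw [mul_add] at h6
    omega
  have hmono : StrictMono (Nat.nth Nat.Prime) := Nat.nth_strictMono Nat.infinite_setOfPred_prime
  have hrange : ∀ t < S 0, ∀ u < ℓ, ∀ r < m, 16 ^ (j + 2 * u) ≤ N t (u, r) ∧
        N t (u, r) < 16 ^ (j + 2 * u + 1) := by
    intro t ht u hu r hr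
    refine ⟨?_, Nat.nth_lt_of_lt_count (hidx t ht u hu r hr)⟩
    exact (Nat.le_nth_count Nat.infinite_setOfPred_prime _).trans (hmono.monotone (Nat.le_add_right _ _))
  refine ⟨S 0, N, hSpos 0, ?_, fun t i => Nat.prime_nth_prime _, hrange, ?_, ?_⟩
  · have := hShalf 0
    rw [mul_zero, add_zero] at this
    exact_mod_cast this
  · intro t ht u hu r hr r' hr' hrr
    have h1 : S u + N t (u, r) ≤ N t (u, r') := by
      refine (hmono.add_le_nat _ _).trans (hmono.monotone ?_)
      have : (r + 1) * S u ≤ r' * S u := Nat.mul_le_mul_right _ hrr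
      simp only; linarith
    have h2 : (S u : ℝ) + N t (u, r) ≤ N t (u, r') := by exact_mod_cast h1
    have h3 : (16 : ℝ) ^ (j + 2 * u) ≤ 2 * ((3 * j + 1) * m) * S u := by exact_mod_cast hShalf u
    have : (16 : ℝ) ^ (j + 2 * u) / (2 * ((3 * j + 1) * m)) ≤ S u := by
      rw [div_le_iff₀ (by positivity)]; linarith
    linarith
  · intro t ht u hu r hr t' ht' u' hu' r' hr' heq
    have e1 := hrange t ht u hu r hr
    have e2 := hrange t' ht' u' hu' r' hr'
    rw [← heq] at e2
    have hlt1 := (Nat.pow_lt_pow_iff_right (by norm_num : 1 < 16)).mp (e1.1.trans_lt e2.2)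
    have hlt2 := (Nat.pow_lt_pow_iff_right (by norm_num : 1 < 16)).mp (e2.1.trans_lt e1.2)
    have huu : u = u' := by omega
    subst huu
    have hii := hmono.injective heq
    simp only at hii
    have hii2 : t + r * S u = t' + r' * S u := by omega
    have hm1 := congrArg (· % S u) hii2
    have hm2 := congrArg (· / S u) hii2
    have := hTS u
    simp only [Nat.add_mul_mod_self_right, Nat.mod_eq_of_lt (ht.trans_le this), Nat.mod_eq_of_lt (ht'.trans_le this)] at hm1
    simp only [Nat.add_mul_div_right _ _ (hSpos u), Nat.div_eq_of_lt (ht.trans_le this), Nat.div_eq_of_lt (ht'.trans_le this), zero_add] at hm2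
    exact ⟨hm1, rfl, hm2⟩

/-- The measure `∑_{p ∈ P} κ p v δ_{log p}` is a substitute for the point mass at `v`, for all `v` in
the block `[j log 16, (j + 1) log 16]`: the weights are at most `e^{-(1 - δ) v}`, and the Laplace
transforms differ by at most `e^{-v}` on the disc `‖s‖ ≤ R`. -/
structure GoodKernel (R δ : ℝ) (j : ℕ) (κ : ℕ → ℝ → ℝ) (P : Finset ℕ) : Prop where
  prime : ∀ p ∈ P, p.Prime
  cont : ∀ p, Continuous (κ p)
  bound : ∀ p, ∀ v ∈ Icc (j * Real.log 16) ((j + 1) * Real.log 16),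
    |κ p v| ≤ Real.exp (-(1 - δ) * v)
  approx : ∀ s : ℂ, ‖s‖ ≤ R → ∀ v ∈ Icc (j * Real.log 16) ((j + 1) * Real.log 16),
    ‖cexp (-s * v) - ∑ p ∈ P, (κ p v : ℂ) * cexp (-s * Real.log p)‖ ≤ Real.exp (-v)

/-- Averaging `T` approximations supported on pairwise disjoint sets of primes keeps the error and
divides the weights by `T`. -/
theorem kernel_average {ι : Type*} [DecidableEq ι] (s : Finset ι) (T : ℕ) (hT : 1 ≤ T)
    (N : ℕ → ι → ℕ) (b : ℕ → ι → ℝ → ℝ) (hb : ∀ t i, Continuous (b t i))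
    (hprime : ∀ t i, (N t i).Prime)
    (hinj : ∀ t < T, ∀ i ∈ s, ∀ t' < T, ∀ i' ∈ s, N t i = N t' i' → t = t' ∧ i = i')
    {R δ Λ : ℝ} {j : ℕ}
    (hbound : ∀ t < T, ∀ i ∈ s, ∀ v ∈ Icc (j * Real.log 16) ((j + 1) * Real.log 16), |b t i v| ≤ Λ)
    (hΛT : ∀ v ∈ Icc (j * Real.log 16) ((j + 1) * Real.log 16), Λ / T ≤ Real.exp (-(1 - δ) * v))
    (hΛ : 0 ≤ Λ)
    (happ : ∀ t < T, ∀ w : ℂ, ‖w‖ ≤ R → ∀ v ∈ Icc (j * Real.log 16) ((j + 1) * Real.log 16),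
      ‖cexp (-w * v) - ∑ i ∈ s, (b t i v : ℂ) * cexp (-w * Real.log (N t i))‖ ≤ Real.exp (-v)) :
    ∃ κ P, GoodKernel R δ j κ P := by
  classical
  set I := Finset.range T ×ˢ s with hI
  have hinj' : Set.InjOn (fun q : ℕ × ι => N q.1 q.2) I := by
    rintro ⟨t, i⟩ hq ⟨t', i'⟩ hq' h
    simp only [hI, Finset.coe_product, Set.mem_prod, Finset.mem_coe, Finset.mem_range] at hq hq'
    obtain ⟨h1, h2⟩ := hinj t hq.1 i hq.2 t' hq'.1 i' hq'.2 h
    rw [h1, h2]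
  have hT0 : (0 : ℝ) < T := by exact_mod_cast hT
  refine ⟨fun p v => (∑ q ∈ I, if N q.1 q.2 = p then b q.1 q.2 v else 0) / T,
    I.image (fun q => N q.1 q.2), ?_, ?_, ?_, ?_⟩
  · intro p hp
    obtain ⟨q, _, rfl⟩ := Finset.mem_image.mp hp
    exact hprime _ _
  · intro p
    refine Continuous.div_const (continuous_finsetSum _ fun q _ => ?_) _
    split_ifs
    · exact hb _ _
    · exact continuous_const
  · intro p v hv
    refine le_trans ?_ (hΛT v hv)
    rw [abs_div, abs_of_pos hT0]
    gcongr
    by_cases hp : ∃ q ∈ I, N q.1 q.2 = p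
    · obtain ⟨q, hq, rfl⟩ := hp
      rw [Finset.sum_eq_single q]
      · rw [if_pos rfl]
        have := Finset.mem_product.mp hq
        exact hbound _ (Finset.mem_range.mp this.1) _ this.2 v hv
      · intro q' hq' hne
        rw [if_neg]
        exact fun h => hne (hinj' hq' hq h)
      · exact fun h => absurd hq h
    · push Not at hp
      rw [Finset.sum_eq_zero fun q hq => if_neg (hp q hq)]
      simpa using hΛ
  · intro w hw v hv
    have h1 : ∑ p ∈ I.image (fun q => N q.1 q.2),
        (((∑ q ∈ I, if N q.1 q.2 = p then b q.1 q.2 v else 0) / T : ℝ) : ℂ) *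
          cexp (-w * Real.log p) =
        (∑ t ∈ Finset.range T, ∑ i ∈ s, (b t i v : ℂ) * cexp (-w * Real.log (N t i))) / T := by
      rw [Finset.sum_image hinj', ← Finset.sum_product' (Finset.range T) s
        (fun t i => (b t i v : ℂ) * cexp (-w * Real.log (N t i))), Finset.sum_div]
      refine Finset.sum_congr rfl fun q hq => ?_
      rw [Finset.sum_eq_single q]
      · rw [if_pos rfl]; push_cast; ring
      · intro q' hq' hne
        exact if_neg fun h => hne (hinj' hq' hq h)
      · exact fun h => absurd hq h
    rw [h1]
    have hTC : (T : ℂ) ≠ 0 := by exact_mod_cast hT0.ne'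
    have h2 : cexp (-w * v) - (∑ t ∈ Finset.range T, ∑ i ∈ s, (b t i v : ℂ) *
        cexp (-w * Real.log (N t i))) / T = (∑ t ∈ Finset.range T, (cexp (-w * v) -
          ∑ i ∈ s, (b t i v : ℂ) * cexp (-w * Real.log (N t i)))) / T := by
      rw [Finset.sum_sub_distrib, Finset.sum_const, Finset.card_range, nsmul_eq_mul]
      field_simp
    rw [h2, norm_div, Complex.norm_natCast, div_le_iff₀ hT0]
    refine (norm_sum_le _ _).trans ((Finset.sum_le_card_nsmul _ _ _ fun t ht =>
      happ t (Finset.mem_range.mp ht) w hw v hv).trans ?_)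
    rw [Finset.card_range, nsmul_eq_mul, mul_comm]

theorem log_sixteen_ge : (2 : ℝ) ≤ Real.log 16 := by
  have : Real.log 16 = 4 * Real.log 2 := by
    rw [show (16 : ℝ) = 2 ^ 4 by norm_num, Real.log_pow]; norm_num
  rw [this]; linarith [Real.log_two_gt_d9]

theorem poly_le_exp (m : ℕ) (C c K : ℝ) (hc : 0 < c) (hC : 0 < C) :
    ∀ᶠ j : ℕ in atTop, (C * (j + 1) ^ 2) ^ m * (C * (j + 1) ^ 2) ≤ Real.exp (c * j - K) := by
  have h1 := (isLittleO_pow_exp_pos_mul_atTop (k := 2 * (m + 1)) hc).def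
    (show 0 < Real.exp (-c - K) / C ^ (m + 1) by positivity)
  have h2 : Tendsto (fun j : ℕ => (j : ℝ) + 1) atTop atTop :=
    tendsto_atTop_add_const_right _ _ tendsto_natCast_atTop_atTop
  filter_upwards [h2.eventually h1] with j hj
  rw [Real.norm_of_nonneg (by positivity), Real.norm_of_nonneg (by positivity),
    div_mul_eq_mul_div, le_div_iff₀ (by positivity), ← Real.exp_add] at hj
  calc _ = ((j : ℝ) + 1) ^ (2 * (m + 1)) * C ^ (m + 1) := by
        rw [mul_pow, ← pow_mul]; ring
    _ ≤ _ := hj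
    _ = _ := by congr 1; ring

set_option maxHeartbeats 4000000 in
/-- Good kernels exist in every sufficiently far block. The number of nodes is `n = m ℓ ≈ j / g`: the
integer `g` is chosen so large that the Lagrange basis is `e^{δ j β / 2}` up to polynomial factors, and
then `m` so large that the Taylor factor `(2 e β R / m) ^ n` beats `e^{-(R + 3) β j}`. -/
theorem kernel_fixed (R δ : ℝ) (hR : 1 ≤ R) (hδ : 0 < δ) (hδ1 : δ ≤ 1) :
    ∀ᶠ j : ℕ in atTop, ∃ κ P, GoodKernel R δ j κ P := by
  set β := Real.log 16 with hβdef
  have hβ : 2 ≤ β := log_sixteen_ge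
  have hβ0 : 0 < β := by linarith
  obtain ⟨g, hg⟩ := exists_nat_ge (6 / (δ * β) + 1)
  have hg6 : 6 ≤ δ * β * g := by
    rw [← div_le_iff₀' (by positivity)]; linarith
  have hg1 : 1 ≤ g := by
    have : (1 : ℝ) ≤ g := by have : 0 < 6 / (δ * β) := by positivity
                             linarith
    exact_mod_cast this
  have hgpos : (0 : ℝ) < g := by exact_mod_cast hg1
  set L : ℝ := 2 * g * (R + 3) * β with hL
  have hL0 : 0 ≤ L := by positivity
  obtain ⟨m, hmL⟩ := exists_nat_ge (2 * Real.exp 5 * β * R * Real.exp L)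
  have hmR : 2 * R * β ≤ m := by
    refine le_trans ?_ hmL
    have h5 : 1 ≤ Real.exp 5 := Real.one_le_exp (by norm_num)
    have h6 : 1 ≤ Real.exp L := Real.one_le_exp hL0
    have h7 : 1 ≤ Real.exp 5 * Real.exp L := one_le_mul_of_one_le_of_one_le h5 h6
    calc 2 * R * β = 2 * R * β * 1 := by ring
      _ ≤ 2 * R * β * (Real.exp 5 * Real.exp L) := by gcongr
      _ = _ := by ring
  have hm1 : 1 ≤ m := by
    have : (1 : ℝ) ≤ m := by nlinarith
    exact_mod_cast this
  have hmpos : (0 : ℝ) < m := by exact_mod_cast hm1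
  set C : ℝ := 96 * β * m with hC
  filter_upwards [node_primes m hm1, poly_le_exp m C (δ * β / 2) β (by positivity) (by positivity),
    poly_le_exp m C (2 * β) β (by positivity) (by positivity),
    eventually_ge_atTop (m * g)] with j hnode hpoly1 hpoly2 hj
  set ℓ := j / (m * g) with hℓ
  have hmg : 0 < m * g := by positivity
  have hℓ1 : 1 ≤ ℓ := (Nat.one_le_div_iff hmg).mpr hj
  have hup : m * ℓ * g ≤ j := by
    have := Nat.div_mul_le_self j (m * g); rw [← hℓ] at this; nlinarith
  have hlow : j ≤ 2 * (m * ℓ * g) := by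
    have h1 := Nat.lt_div_mul_add hmg (a := j)
    rw [← hℓ] at h1
    have : m * g ≤ ℓ * (m * g) := Nat.le_mul_of_pos_left _ hℓ1
    nlinarith
  have hmℓj : m * ℓ ≤ j := (Nat.le_mul_of_pos_right _ hg1).trans hup
  have hℓj : ℓ ≤ j := (Nat.le_mul_of_pos_left _ hm1).trans hmℓj
  obtain ⟨T, N, hT1, hT, hprime, hrange, hsep, hinj⟩ := hnode ℓ hℓj
  set D : ℝ := (3 * j + 1) * m with hD
  have hDpos : 0 < D := by positivity
  have hm1' : (1 : ℝ) ≤ m := by exact_mod_cast hm1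
  have hD1 : 1 ≤ D := by
    rw [hD]; have : (0:ℝ) ≤ j := by positivity
    nlinarith
  set d : ℝ := 1 / (32 * D) with hd
  have hdpos : 0 < d := by positivity
  have hd1 : d ≤ 1 := by
    rw [hd, div_le_one (by positivity)]; linarith
  set s := Finset.range ℓ ×ˢ Finset.range m with hs
  set x : ℕ → ℕ × ℕ → ℝ := fun t i => Real.log (N t i) with hx
  have hℓ1' : (1 : ℝ) ≤ ℓ := by exact_mod_cast hℓ1
  have hNpos : ∀ t i, (0 : ℝ) < N t i := fun t i => by exact_mod_cast (hprime t i).pos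
  have hxlo : ∀ t < T, ∀ u < ℓ, ∀ r < m, (j + 2 * u : ℝ) * β ≤ x t (u, r) ∧
      x t (u, r) ≤ (j + 2 * u + 1 : ℝ) * β := by
    intro t ht u hu r hr
    obtain ⟨h1, h2⟩ := hrange t ht u hu r hr
    constructor
    · have := Real.log_le_log (by positivity) (show ((16:ℝ) ^ (j + 2 * u)) ≤ N t (u, r) by exact_mod_cast h1)
      rw [Real.log_pow] at this
      push_cast at this; exact this
    · have := Real.log_le_log (hNpos _ _) (show (N t (u, r) : ℝ) ≤ ((16:ℝ) ^ (j + 2 * u + 1)) by exact_mod_cast h2.le)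
      rw [Real.log_pow] at this
      push_cast at this; exact this
  have hsame' : ∀ t < T, ∀ u < ℓ, ∀ r < m, ∀ r' < m, r < r' → d ≤ x t (u, r') - x t (u, r) := by
    intro t ht u hu r hr r' hr' hrr
    have h1 := hsep t ht u hu r hr r' hr' hrr
    have h2 := (hrange t ht u hu r' hr').2
    have h2' : (N t (u, r') : ℝ) ≤ (16:ℝ) ^ (j + 2 * u) * 16 := by
      rw [← pow_succ]; exact_mod_cast h2.le
    have h3 := Real.one_sub_inv_le_log_of_pos (div_pos (hNpos t (u, r')) (hNpos t (u, r)))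
    rw [Real.log_div (hNpos _ _).ne' (hNpos _ _).ne', inv_div] at h3
    refine le_trans ?_ h3
    have : 1 - (N t (u, r) : ℝ) / N t (u, r') = ((N t (u, r') : ℝ) - N t (u, r)) / N t (u, r') := by
      rw [sub_div, div_self (hNpos _ _).ne']
    rw [this, le_div_iff₀ (hNpos _ _)]
    refine le_trans ?_ h1
    rw [hd, le_div_iff₀ (by positivity)]
    calc 1 / (32 * D) * (N t (u, r') : ℝ) * (2 * D) = (N t (u, r') : ℝ) / 16 := by field_simp; ring
      _ ≤ _ := by linarith
  have hsame : ∀ t < T, ∀ u < ℓ, ∀ r < m, ∀ r' < m, r ≠ r' → d ≤ |x t (u, r) - x t (u, r')| := by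
    intro t ht u hu r hr r' hr' hrr
    rcases lt_or_gt_of_ne hrr with h | h
    · rw [abs_sub_comm]; exact (hsame' t ht u hu r hr r' hr' h).trans (le_abs_self _)
    · exact (hsame' t ht u hu r' hr' r hr h).trans (le_abs_self _)
  have hdiff' : ∀ t < T, ∀ u < ℓ, ∀ u' < ℓ, ∀ r < m, ∀ r' < m, u < u' →
      β * ((u' : ℝ) - u) ≤ x t (u', r') - x t (u, r) := by
    intro t ht u hu u' hu' r hr r' hr' huu
    have h1 := (hxlo t ht u hu r hr).2
    have h2 := (hxlo t ht u' hu' r' hr').1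
    have h3 : (u : ℝ) + 1 ≤ u' := by exact_mod_cast huu
    have h4 := mul_le_mul_of_nonneg_right h3 hβ0.le
    linarith
  have hdiff : ∀ t < T, ∀ u < ℓ, ∀ u' < ℓ, ∀ r < m, ∀ r' < m, u ≠ u' →
      β * |(u' : ℝ) - u| ≤ |x t (u, r) - x t (u', r')| := by
    intro t ht u hu u' hu' r hr r' hr' huu
    rcases lt_or_gt_of_ne huu with h | h
    · have h' : (u : ℝ) < u' := by exact_mod_cast h
      rw [abs_sub_comm (x t _), abs_of_pos (sub_pos.mpr h')]
      exact (hdiff' t ht u hu u' hu' r hr r' hr' h).trans (le_abs_self _)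
    · have h' : (u' : ℝ) < u := by exact_mod_cast h
      rw [abs_sub_comm (u' : ℝ), abs_of_pos (sub_pos.mpr h')]
      exact (hdiff' t ht u' hu' u hu r' hr' r hr h).trans (le_abs_self _)
  have hule : ∀ u < ℓ, (u : ℝ) + 1 ≤ ℓ := fun u hu => by exact_mod_cast hu
  have hxc : ∀ t < T, ∀ i ∈ s, |x t i - j * β| ≤ 2 * ℓ * β := by
    rintro t ht ⟨u, r⟩ hi
    obtain ⟨hu, hr⟩ := Finset.mem_product.mp hi
    have hu := Finset.mem_range.mp hu
    have h1 := hxlo t ht u hu r (Finset.mem_range.mp hr)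
    have h2 := mul_le_mul_of_nonneg_right (hule u hu) hβ0.le
    have h3 : (0:ℝ) ≤ u * β := by positivity
    rw [abs_le]; constructor <;> linarith
  have hvc : ∀ v ∈ Icc (j * β) ((j + 1) * β), |v - j * β| ≤ 2 * ℓ * β := by
    intro v hv
    have h2 := mul_le_mul_of_nonneg_right hℓ1' hβ0.le
    rw [abs_le]; constructor <;> linarith [hv.1, hv.2]
  have hvx : ∀ v ∈ Icc (j * β) ((j + 1) * β), ∀ t < T, ∀ u < ℓ, ∀ r < m,
      |v - x t (u, r)| ≤ 2 * ℓ * β := by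
    intro v hv t ht u hu r hr
    have h1 := hxlo t ht u hu r hr
    have h2 := mul_le_mul_of_nonneg_right (hule u hu) hβ0.le
    have h3 : (0:ℝ) ≤ u * β := by positivity
    rw [abs_le]; constructor <;> linarith [hv.1, hv.2]
  have hxinj : ∀ t < T, Set.InjOn (x t) s := by
    rintro t ht ⟨u, r⟩ hi ⟨u', r'⟩ hi' heq
    obtain ⟨hu, hr⟩ := Finset.mem_product.mp hi
    obtain ⟨hu', hr'⟩ := Finset.mem_product.mp hi'
    simp only [Finset.mem_range] at hu hr hu' hr'
    have : (N t (u, r) : ℝ) = N t (u', r') := Real.log_injOn_pos (hNpos _ _) (hNpos _ _) heq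
    obtain ⟨_, h1, h2⟩ := hinj t ht u hu r hr t ht u' hu' r' hr' (by exact_mod_cast this)
    rw [h1, h2]
  set Λ : ℝ := (β * ℓ / d * (4 * Real.exp 1) ^ ℓ) ^ m with hΛ
  have hΛ0 : 0 ≤ Λ := by positivity
  have hbasis : ∀ t < T, ∀ i ∈ s, ∀ v ∈ Icc (j * β) ((j + 1) * β),
      |(Lagrange.basis s (x t) i).eval v| ≤ Λ := fun t ht i hi v hv =>
    lagrange_bound ℓ m (x t) (by linarith) hdpos hd1 (hsame t ht) (hdiff t ht) (hvx v hv t ht) i hi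
  -- `Q` absorbs all factors that are polynomial in `j`, leaving `Λ ≤ Q ^ m * exp (3 * m * ℓ)`.
  set Q : ℝ := C * (j + 1) ^ 2 with hQ
  have hj0 : (0 : ℝ) ≤ j := by positivity
  have hℓj' : (ℓ : ℝ) ≤ j := by exact_mod_cast hℓj
  have hDle : D ≤ 3 * m * (j + 1) := by rw [hD]; nlinarith
  have hbase : β * ℓ / d ≤ Q := by
    rw [hd, hQ, hC, div_div_eq_mul_div, div_one]
    calc β * ℓ * (32 * D) ≤ β * (j + 1) * (32 * (3 * m * (j + 1))) := by gcongr; linarith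
      _ = _ := by ring
  have hΛle : Λ ≤ Q ^ m * Real.exp (3 * (m * ℓ)) := by
    have h4e : 4 * Real.exp 1 ≤ Real.exp 3 := by
      have h1 : Real.exp 3 = Real.exp 1 * Real.exp 1 * Real.exp 1 := by
        rw [← Real.exp_add, ← Real.exp_add]; norm_num
      have h2 := Real.exp_one_gt_d9
      rw [h1]; nlinarith [Real.exp_pos 1]
    rw [hΛ, mul_pow, ← pow_mul]
    have : Real.exp (3 * (m * ℓ)) = Real.exp 3 ^ (ℓ * m) := by
      rw [← Real.exp_nat_mul]; congr 1; push_cast; ring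
    rw [this]
    gcongr
  have hQ1 : (j : ℝ) + 1 ≤ Q := by
    rw [hQ, hC]
    have : 1 ≤ 96 * β * m := by nlinarith
    nlinarith
  have hDQ : 2 * D ≤ Q := by
    have : 6 * m ≤ C := by rw [hC]; nlinarith
    calc 2 * D ≤ 6 * m * (j + 1) := by linarith
      _ ≤ C * (j + 1) := by gcongr
      _ ≤ Q := by rw [hQ]; have : 0 ≤ C := by positivity
                  nlinarith [mul_nonneg this hj0, mul_nonneg (mul_nonneg this hj0) hj0]
  have hup' : (m * ℓ : ℝ) * g ≤ j := by exact_mod_cast hup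
  have hlow' : (j : ℝ) ≤ 2 * (m * ℓ * g) := by exact_mod_cast hlow
  have h16 : (16 : ℝ) ^ j = Real.exp (β * j) := by
    rw [mul_comm, Real.exp_nat_mul, hβdef, Real.exp_log (by norm_num)]
  refine kernel_average s T hT1 N (fun t i v => (Lagrange.basis s (x t) i).eval v)
    (fun t i => Polynomial.continuous _) hprime ?_ (Λ := Λ) hbasis ?_ hΛ0 ?_
  · rintro t ht ⟨u, r⟩ hi t' ht' ⟨u', r'⟩ hi' heq
    obtain ⟨hu, hr⟩ := Finset.mem_product.mp hi
    obtain ⟨hu', hr'⟩ := Finset.mem_product.mp hi'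
    simp only [Finset.mem_range] at hu hr hu' hr'
    obtain ⟨h0, h1, h2⟩ := hinj t ht u hu r hr t' ht' u' hu' r' hr' heq
    rw [h1, h2]; exact ⟨h0, rfl⟩
  · intro v hv
    have hT0 : (0 : ℝ) < T := by exact_mod_cast hT1
    have h3n : 3 * ((m : ℝ) * ℓ) ≤ δ * β / 2 * j := by
      have : 6 * (m * ℓ : ℝ) ≤ δ * β * g * (m * ℓ) := by gcongr
      linarith [mul_le_mul_of_nonneg_left hup' (by positivity : 0 ≤ δ * β)]
    calc Λ / T ≤ Λ / (Real.exp (β * j) / (2 * D)) := by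
          gcongr
          rw [div_le_iff₀ (by positivity), ← h16]; linarith
      _ = Λ * (2 * D) * Real.exp (-(β * j)) := by
          rw [Real.exp_neg]; field_simp
      _ ≤ (Q ^ m * Real.exp (3 * (m * ℓ))) * Q * Real.exp (-(β * j)) := by gcongr
      _ = (Q ^ m * Q) * (Real.exp (3 * (m * ℓ)) * Real.exp (-(β * j))) := by ring
      _ ≤ Real.exp (δ * β / 2 * j - β) * (Real.exp (δ * β / 2 * j) * Real.exp (-(β * j))) := by
          gcongr
      _ = Real.exp (-(1 - δ) * (j * β) - β) := by
          rw [← Real.exp_add, ← Real.exp_add]; congr 1; ring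
      _ ≤ Real.exp (-(1 - δ) * v) := by
          gcongr
          have := mul_le_mul_of_nonneg_left hv.2 (sub_nonneg.mpr hδ1)
          have := mul_pos hδ hβ0
          linarith
  · intro t ht w hw v hv
    have hcard : s.card = m * ℓ := by
      rw [hs, Finset.card_product, Finset.card_range, Finset.card_range, mul_comm]
    have h := interp_error s (x t) (hxinj t ht) (c := j * β) (W := 2 * ℓ * β) (R := R) (Λ := Λ)
      (v := v) (by linarith) hΛ0 (hxc t ht) (hvc v hv) (fun i hi => hbasis t ht i hi v hv) w hw
    refine h.trans ?_
    rw [hcard]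
    set n := m * ℓ with hn
    have hn1 : 1 ≤ n := Nat.mul_pos hm1 hℓ1
    have hnc : (n : ℝ) = m * ℓ := by rw [hn]; push_cast; ring
    have hnpos : (0 : ℝ) < n := by exact_mod_cast hn1
    have hfact : (R * (2 * ℓ * β)) ^ n / n.factorial ≤ (2 * Real.exp 1 * β * R / m) ^ n := by
      have h1 := Real.pow_div_factorial_le_exp (n : ℝ) hnpos.le n
      have h2 : (1 : ℝ) / n.factorial ≤ (Real.exp 1 / n) ^ n := by
        rw [div_pow, ← Real.exp_nat_mul, mul_one, le_div_iff₀ (by positivity)]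
        calc _ = (n : ℝ) ^ n / n.factorial := by ring
          _ ≤ _ := h1
      calc _ = (R * (2 * ℓ * β)) ^ n * (1 / n.factorial) := by ring
        _ ≤ (R * (2 * ℓ * β)) ^ n * (Real.exp 1 / n) ^ n := by gcongr
        _ = _ := by
          rw [← mul_pow, hnc]; congr 1; field_simp
    have hRW : R * (2 * ℓ * β) ≤ n := by
      rw [hnc]; linarith [mul_le_mul_of_nonneg_right hmR (by positivity : (0:ℝ) ≤ ℓ)]
    have hbr : 1 + n * Λ ≤ Q ^ m * Q * Real.exp (3 * n) := by
      have hnj : (n : ℝ) ≤ j := by exact_mod_cast hmℓj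
      have hX : 1 ≤ Q ^ m * Real.exp (3 * n) :=
        one_le_mul_of_one_le_of_one_le (one_le_pow₀ (by linarith)) (Real.one_le_exp (by positivity))
      have hΛ' : Λ ≤ Q ^ m * Real.exp (3 * n) := by rw [hnc]; exact hΛle
      calc 1 + n * Λ ≤ Q ^ m * Real.exp (3 * n) + j * (Q ^ m * Real.exp (3 * n)) := by gcongr
        _ = (j + 1) * (Q ^ m * Real.exp (3 * n)) := by ring
        _ ≤ Q * (Q ^ m * Real.exp (3 * n)) := by gcongr
        _ = _ := by ring
    have hpow : (2 * Real.exp 1 * β * R / m) ^ n ≤ Real.exp (-(4 + L) * n) := by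
      rw [mul_comm (-(4 + L)), Real.exp_nat_mul]
      gcongr
      rw [div_le_iff₀ hmpos]
      calc 2 * Real.exp 1 * β * R = Real.exp (-(4 + L)) * (2 * Real.exp 5 * β * R * Real.exp L) := by
            rw [show (5:ℝ) = 1 + 4 by norm_num, Real.exp_add, neg_add, Real.exp_add, Real.exp_neg,
              Real.exp_neg]; field_simp
        _ ≤ _ := by gcongr
    have hLn : (R + 3) * β * j ≤ L * n := by
      rw [hL, hnc]
      calc (R + 3) * β * j ≤ (R + 3) * β * (2 * (m * ℓ * g)) := by gcongr
        _ = _ := by ring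
    rw [abs_of_nonneg (by positivity : 0 ≤ (j : ℝ) * β)]
    calc _ ≤ Real.exp (R * (j * β)) * ((Q ^ m * Q * Real.exp (3 * n)) *
          (Real.exp (-(4 + L) * n) * Real.exp n)) := by
          gcongr
          exact hfact.trans hpow
      _ = (Q ^ m * Q) * (Real.exp (R * (j * β)) * Real.exp (3 * n) * Real.exp (-(4 + L) * n) *
          Real.exp n) := by ring
      _ ≤ Real.exp (2 * β * j - β) * (Real.exp (R * (j * β)) * Real.exp (3 * n) *
          Real.exp (-(4 + L) * n) * Real.exp n) := by gcongr
      _ ≤ Real.exp (-v) := by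
          rw [← Real.exp_add, ← Real.exp_add, ← Real.exp_add, ← Real.exp_add]
          gcongr
          linarith [hv.2]

theorem GoodKernel.mono {R δ R' δ' : ℝ} {j : ℕ} {κ : ℕ → ℝ → ℝ} {P : Finset ℕ}
    (h : GoodKernel R δ j κ P) (hR : R' ≤ R) (hδ : δ ≤ δ') : GoodKernel R' δ' j κ P where
  prime := h.prime
  cont := h.cont
  bound p v hv := by
    refine (h.bound p v hv).trans (Real.exp_le_exp.mpr ?_)
    have hv0 : 0 ≤ v := le_trans (by have := log_sixteen_ge; positivity) hv.1
    nlinarith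
  approx s hs v hv := h.approx s (hs.trans hR) v hv

/-- One family of kernels, independent of `R` and `δ`, that is eventually good for each `R` and `δ`:
in block `j` the best available parameter `h ≤ j` is used, with `R = h + 1` and `δ = 1 / (h + 1)`. This
is what makes the quantization errors entire functions. -/
theorem kernels : ∃ (κ : ℕ → ℕ → ℝ → ℝ) (P : ℕ → Finset ℕ),
    (∀ j, ∀ p ∈ P j, p.Prime) ∧ (∀ j p, Continuous (κ j p)) ∧
    ∀ R δ : ℝ, 0 < δ → ∀ᶠ j in atTop, GoodKernel R δ j (κ j) (P j) := by
  classical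
  set good : ℕ → ℕ → Prop := fun h j => ∃ κ P, GoodKernel (h + 1) (1 / (h + 1)) j κ P with hgood
  set H : ℕ → ℕ := fun j => Nat.findGreatest (fun h => good h j) j with hH
  have hch : ∀ j, ∃ (κ : ℕ → ℝ → ℝ) (P : Finset ℕ), (∀ p ∈ P, p.Prime) ∧
      (∀ p, Continuous (κ p)) ∧ (good (H j) j → GoodKernel (H j + 1) (1 / (H j + 1)) j κ P) := by
    intro j
    by_cases h : good (H j) j
    · obtain ⟨κ, P, hκ⟩ := h
      exact ⟨κ, P, hκ.prime, hκ.cont, fun _ => hκ⟩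
    · exact ⟨fun _ _ => 0, ∅, by simp, fun _ => continuous_const, fun h' => absurd h' h⟩
  choose κ P hprime hcont hk using hch
  refine ⟨κ, P, hprime, hcont, fun R δ hδ => ?_⟩
  obtain ⟨h, hh⟩ := exists_nat_ge (max R (1 / δ))
  have hfix := kernel_fixed (h + 1) (1 / (h + 1)) (by have : (0:ℝ) ≤ h := by positivity
                                                      linarith) (by positivity)
    (by rw [div_le_one (by positivity)]; have : (0:ℝ) ≤ h := by positivity
        linarith)
  filter_upwards [hfix, eventually_ge_atTop h] with j hj hjh
  have hle : h ≤ H j := Nat.le_findGreatest hjh hj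
  have hg : good (H j) j := Nat.findGreatest_spec (P := fun h => good h j) hjh hj
  have hle' : (h : ℝ) ≤ H j := by exact_mod_cast hle
  refine (hk j hg).mono ?_ ?_
  · linarith [le_max_left R (1 / δ)]
  · rw [div_le_iff₀ (by positivity)]
    have : 1 / δ ≤ H j := (le_max_right R (1 / δ)).trans (hh.trans hle')
    rw [div_le_iff₀ hδ] at this
    linarith

section

open MeasureTheory

/-! ### Laplace transforms as Dirichlet series over primes -/

theorem norm_cexp_neg_mul_le (s : ℂ) {v b : ℝ} (hv : 0 ≤ v) (hvb : v ≤ b) {R : ℝ} (hs : ‖s‖ ≤ R) :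
    ‖cexp (-s * v)‖ ≤ Real.exp (R * b) := by
  refine (Complex.norm_exp_le_exp_norm _).trans (Real.exp_le_exp.mpr ?_)
  rw [norm_mul, norm_neg, Complex.norm_real, Real.norm_of_nonneg hv]
  have := norm_nonneg s
  exact mul_le_mul hs hvb hv (this.trans hs)

theorem block_integral_differentiable {G : ℝ → ℂ} (hG : Measurable G) {a b C : ℝ} (ha : 0 ≤ a)
    (hC : ∀ v ∈ Ioc a b, ‖G v‖ ≤ C) :
    Differentiable ℂ fun s : ℂ => ∫ v in Ioc a b, G v * cexp (-s * v) := by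
  intro s0
  have hmeas : ∀ s : ℂ, Measurable fun v : ℝ => G v * cexp (-s * v) := fun s =>
    hG.mul (by fun_prop)
  have hmeas' : ∀ s : ℂ, Measurable fun v : ℝ => G v * (cexp (-s * v) * (-1 * v)) := fun s =>
    hG.mul (by fun_prop)
  have hle : ∀ s ∈ Metric.ball s0 1, ‖s‖ ≤ ‖s0‖ + 1 := by
    intro s hs
    have := norm_sub_norm_le s s0
    rw [Metric.mem_ball, dist_eq_norm] at hs
    linarith
  have hF : ∀ s ∈ Metric.ball s0 1, ∀ v ∈ Ioc a b, ‖G v * cexp (-s * v)‖ ≤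
      C * Real.exp ((‖s0‖ + 1) * b) := by
    intro s hs v hv
    rw [norm_mul]
    exact mul_le_mul (hC v hv) (norm_cexp_neg_mul_le s (ha.trans hv.1.le) hv.2 (hle s hs))
      (norm_nonneg _) ((norm_nonneg _).trans (hC v hv))
  refine ((hasDerivAt_integral_of_dominated_loc_of_deriv_le (F := fun s v => G v * cexp (-s * v))
    (F' := fun s v => G v * (cexp (-s * v) * (-1 * v)))
    (bound := fun _ => C * Real.exp ((‖s0‖ + 1) * b) * b)
    (μ := volume.restrict (Ioc a b)) (Metric.ball_mem_nhds s0 one_pos) ?_ ?_ ?_ ?_ ?_ ?_).2).differentiableAt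
  · exact Eventually.of_forall fun s => (hmeas s).aestronglyMeasurable
  · refine Integrable.of_bound (hmeas s0).aestronglyMeasurable (C * Real.exp ((‖s0‖ + 1) * b)) ?_
    exact ae_restrict_of_forall_mem measurableSet_Ioc (hF s0 (Metric.mem_ball_self one_pos))
  · exact (hmeas' s0).aestronglyMeasurable
  · refine ae_restrict_of_forall_mem measurableSet_Ioc fun v hv s hs => ?_
    rw [← mul_assoc, norm_mul]
    refine mul_le_mul (hF s hs v hv) ?_ (norm_nonneg _) ((norm_nonneg _).trans (hF s hs v hv))
    rw [norm_mul, norm_neg, norm_one, one_mul, Complex.norm_real,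
      Real.norm_of_nonneg (ha.trans hv.1.le)]
    exact hv.2
  · exact integrable_const _
  · refine Eventually.of_forall fun v s _ => ?_
    exact (((hasDerivAt_id s).neg.mul_const (v : ℂ)).cexp).const_mul (G v)

/-- A Laplace transform with density `G = O(e^{σ v})`, `σ < 1`, is a Dirichlet series over the primes
up to an entire function; the coefficients and, on `‖s‖ ≤ R`, the entire function are at most `ε`
as soon as `G` is at most `η` on the initial interval `(0, V]`. The kernels are applied blockwise beyond
`V`, and what happens on `(0, V]` is put into the entire function. -/
theorem laplace_quantize (σ R ε : ℝ) (hσ : σ < 1) (hε : 0 < ε) :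
    ∃ V η : ℝ, 0 ≤ V ∧ 0 < η ∧ ∀ G : ℝ → ℂ, Measurable G →
      (∀ v > 0, ‖G v‖ ≤ Real.exp (σ * v)) → (∀ v ∈ Ioc 0 V, ‖G v‖ ≤ η) →
      ∃ (a : ℕ → ℂ) (e : ℂ → ℂ), (∀ p, ¬ p.Prime → a p = 0) ∧ (∀ p, ‖a p‖ ≤ ε) ∧
        Differentiable ℂ e ∧ (∀ s, ‖s‖ ≤ R → ‖e s‖ ≤ ε) ∧
        ∀ s : ℂ, 1 < s.re → ∫ v in Ioi (0 : ℝ), G v * cexp (-s * v) =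
          ∑' p, a p * cexp (-s * Real.log p) + e s := by
  classical
  obtain ⟨κ, P, hprime, hcont, hgood⟩ := kernels
  set β := Real.log 16 with hβdef
  have hβ0 : 0 < β := by have := log_sixteen_ge; linarith
  set δ : ℝ := (1 - σ) / 2 with hδ
  have hδ0 : 0 < δ := by rw [hδ]; linarith
  set bd : ℕ → ℝ := fun j => β * Real.exp (-δ * (j * β)) with hbd
  have hbd0 : ∀ j, 0 ≤ bd j := fun j => by positivity
  have hbds : Summable bd := by
    refine Summable.mul_left _ ?_
    have : (fun j : ℕ => Real.exp (-δ * (j * β))) = fun j : ℕ => Real.exp (-δ * β) ^ j := by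
      funext j; rw [← Real.exp_nat_mul]; congr 1; ring
    rw [this]
    exact summable_geometric_of_lt_one (Real.exp_pos _).le (Real.exp_lt_one_iff.mpr (by nlinarith))
  obtain ⟨j0, hj0, htail⟩ : ∃ j0, (∀ j ≥ j0, GoodKernel R δ j (κ j) (P j)) ∧
      ∑' j, bd (j + j0) ≤ ε / 2 := by
    have h1 := (tendsto_sum_nat_add bd).eventually (ge_mem_nhds (half_pos hε))
    obtain ⟨j1, h1⟩ := eventually_atTop.mp h1
    obtain ⟨j2, h2⟩ := eventually_atTop.mp (hgood R δ hδ0)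
    exact ⟨max j1 j2, fun j hj => h2 j ((le_max_right _ _).trans hj), h1 _ (le_max_left _ _)⟩
  set η : ℝ := ε / 2 / ((j0 + 1) * (β * Real.exp (|R| * (j0 * β)))) with hη
  refine ⟨j0 * β, η, by positivity, by positivity, fun G hG hGσ hGη => ?_⟩
  set blk : ℕ → Set ℝ := fun j => Ioc (j * β) ((j + 1) * β) with hblk
  have hblkI : ∀ j, ∀ v ∈ blk j, v ∈ Icc (j * β) ((j + 1) * β) := fun j v hv => Ioc_subset_Icc_self hv
  have hblkpos : ∀ j, ∀ v ∈ blk j, 0 < v := fun j v hv =>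
    lt_of_le_of_lt (by positivity) hv.1
  have hvol : ∀ j, volume.real (blk j) = β := fun j => by
    rw [hblk, Real.volume_real_Ioc_of_le (by nlinarith)]; ring
  have hint_le : ∀ (j : ℕ) (f : ℝ → ℂ) (C : ℝ), (∀ v ∈ blk j, ‖f v‖ ≤ C) →
      ‖∫ v in blk j, f v‖ ≤ β * C := by
    intro j f C hf
    have := norm_setIntegral_le_of_norm_le_const (μ := volume) (s := blk j) (by
      simp [hblk, Real.volume_Ioc]) hf
    rwa [hvol, mul_comm] at this
  -- `A j p` is the mass that block `j` contributes at `log p`; blocks before `j0` are not quantized.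
  set A : ℕ → ℕ → ℂ := fun j p => if j0 ≤ j ∧ p ∈ P j then ∫ v in blk j, G v * κ j p v else 0 with hA
  have hGκ : ∀ j R', (GoodKernel R' δ j (κ j) (P j)) → ∀ p, ∀ v ∈ blk j,
      ‖G v * κ j p v‖ ≤ Real.exp (-δ * (j * β)) := by
    intro j R' hj p v hv
    rw [norm_mul, Complex.norm_real, Real.norm_eq_abs]
    calc _ ≤ Real.exp (σ * v) * Real.exp (-(1 - δ) * v) :=
          mul_le_mul (hGσ v (hblkpos j v hv)) (hj.bound p v (hblkI j v hv)) (abs_nonneg _) (Real.exp_pos _).le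
      _ = Real.exp (-δ * v) := by rw [← Real.exp_add]; congr 1; rw [hδ]; ring
      _ ≤ _ := by
        refine Real.exp_le_exp.mpr ?_
        have := mul_le_mul_of_nonneg_left hv.1.le hδ0.le
        linarith
  have hAle : ∀ j p, ‖A j p‖ ≤ if j0 ≤ j then bd j else 0 := by
    intro j p
    simp only [hA]
    by_cases h : j0 ≤ j
    · by_cases hp : p ∈ P j
      · rw [if_pos ⟨h, hp⟩, if_pos h]
        exact hint_le j _ _ (hGκ j R (hj0 j h) p)
      · rw [if_neg (fun h' => hp h'.2), if_pos h, norm_zero]; exact hbd0 j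
    · rw [if_neg (fun h' => h h'.1), if_neg h, norm_zero]
  set bd' : ℕ → ℝ := fun j => if j0 ≤ j then bd j else 0 with hbd'
  have hbd'le : ∀ j, bd' j ≤ bd j := fun j => by
    simp only [hbd']; split_ifs
    · exact le_rfl
    · exact hbd0 j
  have hbd'0 : ∀ j, 0 ≤ bd' j := fun j => by
    simp only [hbd']; split_ifs
    · exact hbd0 j
    · exact le_rfl
  have hbd's : Summable bd' := Summable.of_nonneg_of_le hbd'0 hbd'le hbds
  have hbd'sum : ∑' j, bd' j ≤ ε / 2 := by
    rw [← hbd's.sum_add_tsum_nat_add j0, Finset.sum_eq_zero, zero_add]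
    · refine le_trans (le_of_eq ?_) htail
      exact tsum_congr fun j => if_pos (Nat.le_add_left _ _)
    · intro j hj
      exact if_neg (not_le.mpr (Finset.mem_range.mp hj))
  have hAs : ∀ p, Summable fun j => A j p := fun p =>
    Summable.of_norm_bounded hbd's (fun j => hAle j p)
  have hAprime : ∀ j p, ¬ p.Prime → A j p = 0 := by
    intro j p hp
    exact if_neg fun h => hp (hprime j p h.2)
  have hAP : ∀ j p, p ∉ P j → A j p = 0 := fun j p hp => if_neg fun h => hp h.2
  set Err : ℕ → ℂ → ℂ := fun j s => (∫ v in blk j, G v * cexp (-s * v)) -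
    ∑ p ∈ P j, A j p * cexp (-s * Real.log p) with hErr
  have hGblk : ∀ j, ∀ v ∈ blk j, ‖G v‖ ≤ Real.exp (|σ| * ((j + 1) * β)) := by
    intro j v hv
    refine (hGσ v (hblkpos j v hv)).trans (Real.exp_le_exp.mpr ?_)
    have h0 := (hblkpos j v hv).le
    exact mul_le_mul (le_abs_self _) hv.2 h0 (abs_nonneg _)
  have hErrd : ∀ j, Differentiable ℂ (Err j) := by
    intro j
    refine (block_integral_differentiable hG (by positivity) (hGblk j)).sub ?_
    refine Differentiable.fun_sum fun p _ => ?_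
    fun_prop
  have hErrle : ∀ R' j, j0 ≤ j → GoodKernel R' δ j (κ j) (P j) → ∀ s, ‖s‖ ≤ R' →
      ‖Err j s‖ ≤ bd j := by
    intro R' j hj hk s hs
    have hi1 : IntegrableOn (fun v : ℝ => G v * cexp (-s * v)) (blk j) := by
      refine Measure.integrableOn_of_bounded (M := Real.exp (|σ| * ((j + 1) * β)) *
        Real.exp (‖s‖ * ((j + 1) * β))) (by simp [hblk]) (hG.mul (by fun_prop)).aestronglyMeasurable ?_
      refine ae_restrict_of_forall_mem measurableSet_Ioc fun v hv => ?_
      rw [norm_mul]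
      exact mul_le_mul (hGblk j v hv) (norm_cexp_neg_mul_le s (hblkpos j v hv).le hv.2 le_rfl)
        (norm_nonneg _) (Real.exp_pos _).le
    have hi2 : ∀ p, IntegrableOn (fun v : ℝ => G v * κ j p v) (blk j) := by
      intro p
      refine Measure.integrableOn_of_bounded (M := Real.exp (-δ * (j * β))) (by simp [hblk])
        (hG.mul (Complex.measurable_ofReal.comp (hcont j p).measurable)).aestronglyMeasurable ?_
      exact ae_restrict_of_forall_mem measurableSet_Ioc fun v hv => hGκ j R' hk p v hv
    have heq : Err j s = ∫ v in blk j, G v * (cexp (-s * v) -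
        ∑ p ∈ P j, (κ j p v : ℂ) * cexp (-s * Real.log p)) := by
      simp only [hErr]
      have h2 : ∑ p ∈ P j, A j p * cexp (-s * Real.log p) =
          ∫ v in blk j, ∑ p ∈ P j, G v * κ j p v * cexp (-s * Real.log p) := by
        rw [integral_finsetSum _ fun p _ => (hi2 p).mul_const _]
        refine Finset.sum_congr rfl fun p hp => ?_
        rw [integral_mul_const, hA]
        simp only [if_pos (show j0 ≤ j ∧ p ∈ P j from ⟨hj, hp⟩)]
      rw [h2, ← integral_sub hi1 (integrable_finsetSum _ fun p _ => (hi2 p).mul_const _)]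
      congr 1; funext v
      rw [mul_sub, Finset.mul_sum]
      congr 1
      exact Finset.sum_congr rfl fun p _ => by ring
    rw [heq]
    refine hint_le j _ _ fun v hv => ?_
    rw [norm_mul]
    calc _ ≤ Real.exp (σ * v) * Real.exp (-v) :=
          mul_le_mul (hGσ v (hblkpos j v hv)) (hk.approx s hs v (hblkI j v hv)) (norm_nonneg _) (Real.exp_pos _).le
      _ ≤ _ := by
        rw [← Real.exp_add]
        refine Real.exp_le_exp.mpr ?_
        have h1 := mul_le_mul_of_nonneg_left hv.1.le hδ0.le
        have h2 := mul_pos hδ0 (hblkpos j v hv)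
        have : σ * v + -v = -2 * (δ * v) := by rw [hδ]; ring
        linarith
  have hErrsmall : ∀ j < j0, ∀ s, ‖s‖ ≤ R → ‖Err j s‖ ≤ β * (η * Real.exp (|R| * (j0 * β))) := by
    intro j hj s hs
    have : Err j s = ∫ v in blk j, G v * cexp (-s * v) := by
      simp only [hErr]
      rw [Finset.sum_eq_zero, sub_zero]
      intro p _
      simp only [hA]
      rw [if_neg (fun h => absurd h.1 (not_le.mpr hj)), zero_mul]
    rw [this]
    refine hint_le j _ _ fun v hv => ?_
    have hjj : (j : ℝ) + 1 ≤ j0 := by exact_mod_cast hj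
    have hvV : v ≤ j0 * β := hv.2.trans (by gcongr)
    rw [norm_mul]
    exact mul_le_mul (hGη v ⟨hblkpos j v hv, hvV⟩)
      (norm_cexp_neg_mul_le s (hblkpos j v hv).le hvV (hs.trans (le_abs_self R)))
        (norm_nonneg _) (by positivity)
  -- On a disc of arbitrary radius the kernels are good from some block on, which suffices for
  -- locally uniform convergence of the sum of the errors on all of `ℂ`.
  have hErrloc : ∀ R' : ℝ, ∃ u : ℕ → ℝ, Summable u ∧ ∀ j s, ‖s‖ ≤ R' → ‖Err j s‖ ≤ u j := by
    intro R'
    obtain ⟨J, hJ⟩ := eventually_atTop.mp ((hgood R' δ hδ0).and (eventually_ge_atTop j0))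
    have hcpt : ∀ j, ∃ C, ∀ s ∈ Metric.closedBall (0 : ℂ) R', ‖Err j s‖ ≤ C := fun j =>
      (isCompact_closedBall _ _).exists_bound_of_continuousOn (hErrd j).continuous.continuousOn
    choose C hC using hcpt
    refine ⟨fun j => if j < J then C j else bd j, ?_, ?_⟩
    · refine (summable_nat_add_iff J).mp ?_
      have : (fun n => if n + J < J then C (n + J) else bd (n + J)) = fun n => bd (n + J) := by
        funext n; exact if_neg (by omega)
      rw [this]
      exact (summable_nat_add_iff J).mpr hbds
    · intro j s hs
      simp only
      split_ifs with h
      · exact hC j s (by simpa using hs)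
      · exact hErrle R' j (hJ j (not_lt.mp h)).2 (hJ j (not_lt.mp h)).1 s hs
  refine ⟨fun p => ∑' j, A j p, fun s => ∑' j, Err j s, ?_, ?_, ?_, ?_, ?_⟩
  · intro p hp
    simp [hAprime _ p hp]
  · intro p
    have := tsum_of_norm_bounded hbd's.hasSum (fun j => hAle j p)
    exact this.trans (hbd'sum.trans (by linarith))
  · intro s
    obtain ⟨u, hu, hule⟩ := hErrloc (‖s‖ + 1)
    have := differentiableOn_tsum_of_summable_norm hu (F := Err) (U := Metric.ball 0 (‖s‖ + 1))
      (fun j => (hErrd j).differentiableOn) Metric.isOpen_ball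
      (fun j w hw => hule j w (by simpa using (Metric.mem_ball.mp hw).le))
    exact this.differentiableAt (Metric.isOpen_ball.mem_nhds (by simp))
  · intro s hs
    set u : ℕ → ℝ := fun j => if j < j0 then β * (η * Real.exp (|R| * (j0 * β))) else bd' j with hu
    have hus : HasSum u (j0 * (β * (η * Real.exp (|R| * (j0 * β)))) + ∑' j, bd' j) := by
      have h1 : HasSum (fun j => if j < j0 then β * (η * Real.exp (|R| * (j0 * β))) else 0)
          (j0 * (β * (η * Real.exp (|R| * (j0 * β))))) := by
        have : HasSum (fun j => if j < j0 then β * (η * Real.exp (|R| * (j0 * β))) else 0)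
            (∑ j ∈ Finset.range j0, if j < j0 then β * (η * Real.exp (|R| * (j0 * β))) else 0) :=
          hasSum_sum_of_ne_finset_zero (fun j hj => if_neg (by simpa using hj))
        convert this using 1
        rw [Finset.sum_congr rfl fun j hj => if_pos (Finset.mem_range.mp hj)]
        simp
      convert h1.add hbd's.hasSum using 1
      funext j
      simp only [hu, hbd']
      split_ifs <;> first | omega | simp
    refine (tsum_of_norm_bounded hus fun j => ?_).trans ?_
    · simp only [hu]
      split_ifs with h
      · exact hErrsmall j h s hs
      · rw [hbd']; simp only [if_pos (not_lt.mp h)]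
        exact hErrle R j (not_lt.mp h) (hj0 j (not_lt.mp h)) s hs
    · have : j0 * (β * (η * Real.exp (|R| * (j0 * β)))) ≤ ε / 2 := by
        calc j0 * (β * (η * Real.exp (|R| * (j0 * β)))) ≤
            (j0 + 1) * (β * (η * Real.exp (|R| * (j0 * β)))) := by gcongr; linarith
          _ = ε / 2 := by rw [hη]; field_simp
      linarith
  · intro s hs
    have hGint : IntegrableOn (fun v : ℝ => G v * cexp (-s * v)) (Ioi 0) := by
      have hb : IntegrableOn (fun v : ℝ => Real.exp ((σ - s.re) * v)) (Ioi 0) :=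
        integrableOn_exp_mul_Ioi (by linarith) 0
      refine Integrable.mono' hb (hG.mul (by fun_prop)).aestronglyMeasurable ?_
      refine ae_restrict_of_forall_mem measurableSet_Ioi fun v hv => ?_
      rw [norm_mul, Complex.norm_exp]
      have : (-s * v).re = -s.re * v := by simp
      rw [this, sub_mul, sub_eq_add_neg, Real.exp_add, neg_mul]
      exact mul_le_mul_of_nonneg_right (hGσ v hv) (Real.exp_pos _).le
    have hmono : Monotone (fun j : ℕ => (j : ℝ) * β) := fun i j hij => by
      have : (i : ℝ) ≤ j := by exact_mod_cast hij
      simp only; gcongr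
    have hunion : ⋃ j, blk j = Ioi 0 := by
      have h := iUnion_Ioc_map_succ_eq_Ioi (f := fun j : ℕ => (j : ℝ) * β) (fun j => by
        simpa using hmono (Nat.zero_le j)) (by
        rintro ⟨B, hB⟩
        obtain ⟨n, hn⟩ := exists_nat_gt (B / β)
        rw [div_lt_iff₀ hβ0] at hn
        exact absurd (hB ⟨n, rfl⟩) (not_le.mpr hn))
      simpa [hblk] using h
    have hdisj : Pairwise (Function.onFun Disjoint blk) := by
      have h := hmono.pairwise_disjoint_on_Ioc_succ
      simpa [hblk] using h
    rw [← hunion] at hGint ⊢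
    have hsum := hasSum_integral_iUnion (fun j => measurableSet_Ioc) hdisj hGint
    rw [← hsum.tsum_eq]
    obtain ⟨u, hu, hule⟩ := hErrloc ‖s‖
    have hErrs : Summable fun j => Err j s := Summable.of_norm_bounded hu fun j => hule j s le_rfl
    have hsplit : ∀ j, ∫ v in blk j, G v * cexp (-s * v) =
        ∑' p, A j p * cexp (-s * Real.log p) + Err j s := by
      intro j
      rw [tsum_eq_sum (s := P j) fun p hp => by rw [hAP j p hp, zero_mul]]
      simp only [hErr]; ring
    have hpair : Summable (Function.uncurry fun j p => A j p * cexp (-s * Real.log p)) := by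
      have h1 : Summable fun q : ℕ × ℕ => bd' q.1 * (q.2 : ℝ) ^ (-s.re) :=
        hbd's.mul_of_nonneg (Real.summable_nat_rpow.mpr (by linarith)) hbd'0
          (fun p => by positivity)
      refine Summable.of_norm_bounded h1 ?_
      rintro ⟨j, p⟩
      simp only [Function.uncurry]
      by_cases hp : p.Prime
      · rw [norm_mul]
        refine mul_le_mul (hAle j p) (le_of_eq ?_) (norm_nonneg _) (hbd'0 j)
        have hp0 : (0 : ℝ) < p := by exact_mod_cast hp.pos
        rw [Complex.norm_exp, Real.rpow_def_of_pos hp0]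
        congr 1
        rw [Complex.re_mul_ofReal, Complex.neg_re, mul_comm]
      · rw [hAprime j p hp, zero_mul, norm_zero]
        have := hbd'0 j; positivity
    have hpp : Summable fun j => ∑' p, A j p * cexp (-s * Real.log p) := hpair.prod
    rw [tsum_congr hsplit, Summable.tsum_add hpp hErrs]
    congr 1
    refine (hpair.tsum_comm (f := fun j p => A j p * cexp (-s * Real.log p))).symm.trans ?_
    exact tsum_congr fun p => tsum_mul_right

/-! ### Tails of the logarithm as Laplace transforms -/

theorem integrableOn_pow_mul_exp {b : ℝ} (hb : 0 < b) (n : ℕ) :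
    IntegrableOn (fun v : ℝ => v ^ n * Real.exp (-b * v)) (Ioi 0) := by
  have := integrableOn_rpow_mul_exp_neg_mul_rpow (p := 1) (s := n) (b := b)
    (lt_of_lt_of_le (by norm_num) (Nat.cast_nonneg n)) one_pos hb
  simpa using this

theorem norm_pow_mul_cexp (n : ℕ) (l : ℂ) {v : ℝ} (hv : 0 ≤ v) :
    ‖(v : ℂ) ^ n * cexp (-l * v)‖ = v ^ n * Real.exp (-l.re * v) := by
  rw [norm_mul, norm_pow, Complex.norm_real, Real.norm_of_nonneg hv, Complex.norm_exp,
    Complex.re_mul_ofReal, Complex.neg_re]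

theorem integrableOn_pow_mul_cexp {l : ℂ} (hl : 0 < l.re) (n : ℕ) :
    IntegrableOn (fun v : ℝ => (v : ℂ) ^ n * cexp (-l * v)) (Ioi 0) := by
  refine Integrable.mono' (integrableOn_pow_mul_exp hl n)
    (by fun_prop : Measurable fun v : ℝ => (v : ℂ) ^ n * cexp (-l * v)).aestronglyMeasurable ?_
  exact ae_restrict_of_forall_mem measurableSet_Ioi fun v hv =>
    (norm_pow_mul_cexp n l (le_of_lt hv)).le

theorem integral_pow_mul_cexp {l : ℂ} (hl : 0 < l.re) (n : ℕ) :
    ∫ v in Ioi (0 : ℝ), (v : ℂ) ^ n * cexp (-l * v) = n.factorial / l ^ (n + 1) := by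
  have hl0 : l ≠ 0 := fun h => by simp [h] at hl
  induction n with
  | zero =>
    have := integral_exp_mul_complex_Ioi (a := -l) (by simpa using hl) 0
    simpa using this
  | succ n ih =>
    have hd : ∀ v ∈ Ici (0 : ℝ), HasDerivAt (fun v : ℝ => -((v : ℂ) ^ (n + 1) * cexp (-l * v)) / l)
        ((v : ℂ) ^ (n + 1) * cexp (-l * v) - (n + 1) / l * ((v : ℂ) ^ n * cexp (-l * v))) v := by
      intro v _
      have h1 : HasDerivAt (fun z : ℂ => -(z ^ (n + 1) * cexp (-l * z)) / l)
          (-(((n + 1 : ℕ) : ℂ) * (v : ℂ) ^ n * cexp (-l * v) +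
            (v : ℂ) ^ (n + 1) * (cexp (-l * v) * (-l * 1))) / l) (v : ℂ) := by
        have h2 := (hasDerivAt_pow (n + 1) (v : ℂ)).mul (((hasDerivAt_id (v : ℂ)).const_mul (-l)).cexp)
        exact (h2.neg.div_const l)
      have h3 := h1.comp_ofReal
      convert h3 using 1
      push_cast; field_simp; ring
    have ht : Tendsto (fun v : ℝ => -((v : ℂ) ^ (n + 1) * cexp (-l * v)) / l) atTop (nhds 0) := by
      have h0 : Tendsto (fun v : ℝ => v ^ (n + 1) * Real.exp (-l.re * v)) atTop (nhds 0) := by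
        have := (isLittleO_pow_exp_pos_mul_atTop (n + 1) hl).tendsto_div_nhds_zero
        refine this.congr fun v => ?_
        rw [neg_mul, Real.exp_neg]; rfl
      have h1 : Tendsto (fun v : ℝ => (v : ℂ) ^ (n + 1) * cexp (-l * v)) atTop (nhds 0) := by
        rw [tendsto_zero_iff_norm_tendsto_zero]
        refine h0.congr' ?_
        filter_upwards [eventually_ge_atTop 0] with v hv
        exact (norm_pow_mul_cexp _ _ hv).symm
      simpa using h1.neg.div_const l
    have hi := (integrableOn_pow_mul_cexp hl (n + 1)).sub
      ((integrableOn_pow_mul_cexp hl n).const_mul ((n + 1) / l))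
    have := integral_Ioi_of_hasDerivAt_of_tendsto' hd hi ht
    rw [integral_sub (integrableOn_pow_mul_cexp hl (n + 1))
      ((integrableOn_pow_mul_cexp hl n).const_mul ((n + 1) / l)), integral_const_mul, ih] at this
    simp only [ofReal_zero, ne_eq, Nat.add_eq_zero_iff, one_ne_zero, and_false,
      not_false_eq_true, zero_pow, zero_mul, neg_zero, zero_div, sub_zero] at this
    rw [sub_eq_zero.mp this, Nat.factorial_succ]
    push_cast; field_simp; ring

theorem integral_pow_mul_exp {b : ℝ} (hb : 0 < b) (n : ℕ) :
    ∫ v in Ioi (0 : ℝ), v ^ n * Real.exp (-b * v) = n.factorial / b ^ (n + 1) := by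
  have h := integral_pow_mul_cexp (l := b) (by simpa using hb) n
  have h2 : ∀ v : ℝ, (v : ℂ) ^ n * cexp (-b * v) = ((v ^ n * Real.exp (-b * v) : ℝ) : ℂ) := by
    intro v; push_cast; rfl
  simp_rw [h2] at h
  rw [integral_complex_ofReal] at h
  exact_mod_cast h

/-- The function `∑_{i ≥ q} v ^ (i - 1) / i!` on `v > 0`, in closed form; its Laplace transform at `l` is
`logTail q (1 / l)`. -/
noncomputable def tailDensity (q : ℕ) (v : ℝ) : ℝ :=
  (Real.exp v - ∑ i ∈ Finset.range q, v ^ i / i.factorial) / v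

/-- The tail `∑_{k ≥ q} z ^ k / k` of the series of `-log (1 - z)`. For `q = 0` the term `k = 0` is `0`, by
the convention for division by zero. -/
noncomputable def logTail (q : ℕ) (z : ℂ) : ℂ := ∑' i : ℕ, z ^ (i + q) / ((i + q : ℕ) : ℂ)

theorem tailDensity_hasSum (q : ℕ) (v : ℝ) (hv : 0 < v) (hq : 1 ≤ q) :
    HasSum (fun i : ℕ => v ^ (i + q - 1) / (i + q).factorial) (tailDensity q v) := by
  have hs : HasSum (fun i : ℕ => v ^ i / i.factorial) (Real.exp v) := by
    rw [Real.exp_eq_exp_ℝ]; exact NormedSpace.expSeries_div_hasSum_exp v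
  have h1 := ((hasSum_nat_add_iff' q).mpr hs).div_const v
  have hf : (fun i : ℕ => v ^ (i + q - 1) / ((i + q).factorial : ℝ)) =
      fun i : ℕ => v ^ (i + q) / (i + q).factorial / v := by
    funext i
    obtain ⟨k, hk⟩ : ∃ k, i + q = k + 1 := ⟨i + q - 1, by omega⟩
    rw [hk, Nat.add_sub_cancel, pow_succ]; field_simp
  rw [hf]; exact h1

theorem tailDensity_nonneg (q : ℕ) (v : ℝ) (hv : 0 < v) (hq : 1 ≤ q) : 0 ≤ tailDensity q v :=
  (tailDensity_hasSum q v hv hq).nonneg fun i => by positivity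

theorem tailDensity_le (q : ℕ) (v : ℝ) (hv : 0 < v) (hq : 1 ≤ q) :
    tailDensity q v ≤ v ^ (q - 1) / (q - 1).factorial * Real.exp v := by
  rw [tailDensity, div_le_iff₀ hv]
  refine (exp_sub_sum_le hv.le q).trans ?_
  obtain ⟨k, rfl⟩ : ∃ k, q = k + 1 := ⟨q - 1, by omega⟩
  rw [Nat.add_sub_cancel]
  calc v ^ (k + 1) / (k + 1).factorial * Real.exp v ≤ v ^ (k + 1) / k.factorial * Real.exp v := by
        gcongr; exact Nat.le_succ k
    _ = _ := by rw [pow_succ]; ring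

theorem tailDensity_le_exp (q : ℕ) (v : ℝ) (hv : 0 < v) (hq : 1 ≤ q) :
    tailDensity q v ≤ Real.exp v := by
  refine le_trans ?_ ((tailDensity_le 1 v hv le_rfl).trans (by simp))
  unfold tailDensity
  have := Finset.sum_le_sum_of_subset_of_nonneg (Finset.range_mono hq)
    (f := fun i => v ^ i / (i.factorial : ℝ)) (fun i _ _ => by positivity)
  gcongr

theorem tailDensity_measurable (q : ℕ) : Measurable (tailDensity q) := by
  unfold tailDensity; fun_prop

theorem tailDensity_laplace (q : ℕ) (hq : 1 ≤ q) {l : ℂ} (hl : 1 < l.re) :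
    ∫ v in Ioi (0 : ℝ), (tailDensity q v : ℂ) * cexp (-l * v) = logTail q (1 / l) := by
  have hl0 : 0 < l.re := by linarith
  have hlne : l ≠ 0 := fun h => by simp [h] at hl0
  set F : ℕ → ℝ → ℂ := fun i v => ((1 / (i + q).factorial : ℝ) : ℂ) *
    ((v : ℂ) ^ (i + q - 1) * cexp (-l * v)) with hF
  have hFi : ∀ i, Integrable (F i) (volume.restrict (Ioi 0)) := fun i =>
    (integrableOn_pow_mul_cexp hl0 _).const_mul _
  have hfac : ∀ i, ((i + q).factorial : ℝ) = (i + q : ℕ) * ((i + q - 1).factorial : ℝ) := by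
    intro i
    obtain ⟨k, hk⟩ : ∃ k, i + q = k + 1 := ⟨i + q - 1, by omega⟩
    rw [hk, Nat.add_sub_cancel, Nat.factorial_succ]; push_cast; ring
  have hpos : ∀ i, (0 : ℝ) < (i + q : ℕ) := fun i => by exact_mod_cast (by omega : 0 < i + q)
  have hFn : ∀ i, ∫ v in Ioi (0 : ℝ), ‖F i v‖ = (1 / l.re) ^ (i + q) / (i + q : ℕ) := by
    intro i
    have h1 : ∫ v in Ioi (0 : ℝ), ‖F i v‖ = ∫ v in Ioi (0 : ℝ), (1 / (i + q).factorial : ℝ) *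
        (v ^ (i + q - 1) * Real.exp (-l.re * v)) := by
      refine setIntegral_congr_fun measurableSet_Ioi fun v hv => ?_
      simp only [hF]
      rw [norm_mul, norm_pow_mul_cexp _ _ (le_of_lt hv), Complex.norm_real,
        Real.norm_of_nonneg (by positivity)]
    rw [h1, integral_const_mul, integral_pow_mul_exp hl0, hfac, show i + q - 1 + 1 = i + q by omega,
      one_div_pow]
    have := hpos i
    have : ((i + q - 1).factorial : ℝ) ≠ 0 := by positivity
    field_simp
  have hsum : Summable fun i => ∫ v in Ioi (0 : ℝ), ‖F i v‖ := by
    simp_rw [hFn]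
    have hg : Summable fun i : ℕ => (1 / l.re) ^ (i + q) :=
      (summable_nat_add_iff q).mpr (summable_geometric_of_lt_one (by positivity)
        (by rw [div_lt_one hl0]; exact hl))
    refine Summable.of_nonneg_of_le (fun i => by positivity) (fun i => ?_) hg
    refine div_le_self (by positivity) ?_
    exact_mod_cast (by omega : 1 ≤ i + q)
  have hkey := (hasSum_integral_of_summable_integral_norm hFi hsum).tsum_eq
  have hF2 : ∀ i, ∫ v in Ioi (0 : ℝ), F i v = (1 / l) ^ (i + q) / ((i + q : ℕ) : ℂ) := by
    intro i
    simp only [hF]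
    rw [integral_const_mul, integral_pow_mul_cexp hl0, hfac, show i + q - 1 + 1 = i + q by omega,
      one_div_pow]
    have h1 : ((i + q : ℕ) : ℂ) ≠ 0 := by exact_mod_cast (hpos i).ne'
    have : ((i + q - 1).factorial : ℂ) ≠ 0 := by exact_mod_cast Nat.factorial_ne_zero _
    push_cast at h1 ⊢
    field_simp
  rw [logTail, ← tsum_congr hF2, hkey]
  refine setIntegral_congr_fun measurableSet_Ioi fun v hv => ?_
  simp only [hF]
  have h := (Complex.hasSum_ofReal.mpr (tailDensity_hasSum q v hv hq)).mul_right (cexp (-l * v))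
  rw [← h.tsum_eq]
  refine tsum_congr fun i => ?_
  push_cast; ring

theorem logTail_le (q : ℕ) (hq : 1 ≤ q) {z : ℂ} {θ : ℝ} (hz : ‖z‖ ≤ θ) (hθ : θ < 1) :
    ‖logTail q z‖ ≤ θ ^ q / (1 - θ) := by
  have h0 : 0 ≤ θ := (norm_nonneg _).trans hz
  have hg : HasSum (fun i : ℕ => θ ^ (i + q)) (θ ^ q / (1 - θ)) := by
    have := (hasSum_geometric_of_lt_one h0 hθ).mul_left (θ ^ q)
    have hf : (fun i : ℕ => θ ^ (i + q)) = fun i : ℕ => θ ^ q * θ ^ i := by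
      funext i; ring
    rw [hf]; exact this
  refine tsum_of_norm_bounded hg fun i => ?_
  rw [norm_div, norm_pow, Complex.norm_natCast]
  refine (div_le_self (by positivity) ?_).trans (by gcongr)
  exact_mod_cast (by omega : 1 ≤ i + q)

/-- The logarithm of the factor attached to `ρ`, quantized. Increasing the order `q` makes the density
small on the initial interval required by `laplace_quantize`, and makes `logTail` small on the region
in the last clause, where `1 / (1 + s - ρ)` is bounded away from the unit circle. -/
theorem point_factor (ρ : ℂ) (hρ : ρ.re < 1) (R η ε : ℝ) (hη : 0 < η) (hε : 0 < ε) :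
    ∃ (q : ℕ) (a : ℕ → ℂ) (e : ℂ → ℂ), 1 ≤ q ∧ (∀ p, ¬ p.Prime → a p = 0) ∧ (∀ p, ‖a p‖ ≤ ε) ∧
      Differentiable ℂ e ∧ (∀ s, ‖s‖ ≤ R → ‖e s‖ ≤ ε) ∧
      (∀ s : ℂ, 1 < s.re → logTail q (1 / (1 + s - ρ)) =
        ∑' p, a p * cexp (-s * Real.log p) + e s) ∧
      ∀ s : ℂ, (η ≤ s.re - ρ.re ∨ (1 ≤ |s.im - ρ.im| ∧ -(1 / 2) ≤ s.re - ρ.re)) →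
        ‖1 / (1 + s - ρ)‖ < 1 ∧ ‖logTail q (1 / (1 + s - ρ))‖ ≤ ε := by
  obtain ⟨V, τ, hV, hτ, hmain⟩ := laplace_quantize ρ.re R ε hρ hε
  set θ : ℝ := max (1 / (1 + η)) (10 / 11) with hθ
  have hθ1 : θ < 1 := by
    rw [hθ, max_lt_iff]; constructor
    · rw [div_lt_one (by linarith)]; linarith
    · norm_num
  have hθ0 : 0 ≤ θ := le_trans (by norm_num) (le_max_right _ _)
  have h1 : Tendsto (fun q : ℕ => V ^ q / q.factorial * Real.exp V) atTop (nhds 0) := by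
    simpa using (FloorSemiring.tendsto_pow_div_factorial_atTop V).mul_const (Real.exp V)
  have h2 : Tendsto (fun q : ℕ => θ ^ q / (1 - θ)) atTop (nhds 0) := by
    simpa using (tendsto_pow_atTop_nhds_zero_of_lt_one hθ0 hθ1).div_const (1 - θ)
  obtain ⟨k, hk1, hk2⟩ := ((h1.eventually (gt_mem_nhds hτ)).and
    ((tendsto_add_atTop_iff_nat 1).mpr h2 |>.eventually (gt_mem_nhds hε))).exists
  have hq : 1 ≤ k + 1 := by omega
  obtain ⟨a, e, ha, haε, he, heε, hae⟩ := hmain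
    (fun v => cexp ((ρ - 1) * v) * tailDensity (k + 1) v)
    ((by fun_prop : Measurable fun v : ℝ => cexp ((ρ - 1) * v)).mul
      (Complex.measurable_ofReal.comp (tailDensity_measurable _)))
    (by
      intro v hv
      rw [norm_mul, Complex.norm_exp, Complex.re_mul_ofReal, Complex.norm_real,
        Real.norm_of_nonneg (tailDensity_nonneg _ v hv hq), Complex.sub_re, Complex.one_re]
      calc _ ≤ Real.exp ((ρ.re - 1) * v) * Real.exp v := by
            gcongr; exact tailDensity_le_exp _ v hv hq
        _ = _ := by rw [← Real.exp_add]; congr 1; ring)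
    (by
      rintro v ⟨hv, hvV⟩
      rw [norm_mul, Complex.norm_exp, Complex.re_mul_ofReal, Complex.norm_real,
        Real.norm_of_nonneg (tailDensity_nonneg _ v hv hq), Complex.sub_re, Complex.one_re]
      have he1 : Real.exp ((ρ.re - 1) * v) ≤ 1 := Real.exp_le_one_iff.mpr (by nlinarith)
      have hd := tailDensity_le (k + 1) v hv hq
      rw [Nat.add_sub_cancel] at hd
      calc _ ≤ 1 * (v ^ k / k.factorial * Real.exp v) := by
            gcongr
            exact tailDensity_nonneg _ v hv hq
        _ ≤ V ^ k / k.factorial * Real.exp V := by rw [one_mul]; gcongr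
        _ ≤ τ := hk1.le)
  refine ⟨k + 1, a, e, hq, ha, haε, he, heε, ?_, ?_⟩
  · intro s hs
    rw [← hae s hs, ← tailDensity_laplace (k + 1) hq
      (by simp only [Complex.sub_re, Complex.add_re, Complex.one_re]; linarith)]
    congr 1; funext v
    rw [mul_comm (cexp _), mul_assoc, ← Complex.exp_add]
    congr 2; ring
  · intro s hs
    have hz : ‖1 / (1 + s - ρ)‖ ≤ θ := by
      rw [norm_div, norm_one]
      rcases hs with h | ⟨h, h'⟩
      · refine le_trans ?_ (le_max_left _ _)
        have : 1 + η ≤ ‖1 + s - ρ‖ := by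
          refine le_trans ?_ (Complex.re_le_norm _)
          simp only [Complex.sub_re, Complex.add_re, Complex.one_re]; linarith
        gcongr
      · refine le_trans ?_ (le_max_right _ _)
        have : 11 / 10 ≤ ‖1 + s - ρ‖ := by
          rw [Complex.norm_def]
          apply Real.le_sqrt_of_sq_le
          rw [Complex.normSq_apply]
          simp only [Complex.sub_re, Complex.add_re, Complex.one_re, Complex.sub_im,
            Complex.add_im, Complex.one_im, zero_add]
          have h3 : 1 ≤ (s.im - ρ.im) * (s.im - ρ.im) := by
            rw [← abs_mul_abs_self]; nlinarith
          nlinarith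
        calc 1 / ‖1 + s - ρ‖ ≤ 1 / (11 / 10) := by gcongr
          _ = _ := by norm_num
    exact ⟨hz.trans_lt hθ1, (logTail_le _ hq hz hθ1).trans hk2.le⟩

end

/-! ### Cube roots of unity and Abel summation -/

/-- The set of complex cube roots of unity. -/
def cubeRoots : Set ℂ := {1, Complex.exp (2 * Real.pi * Complex.I / 3),
          Complex.exp (-(2 * Real.pi * Complex.I) / 3)}

theorem cubeRoot_eq : Complex.exp (2 * Real.pi * Complex.I / 3) = ⟨-1 / 2, √3 / 2⟩ := by
  have h : (2 * Real.pi * Complex.I / 3 : ℂ) = ((Real.pi - Real.pi / 3 : ℝ) : ℂ) * I := by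
    push_cast; ring
  rw [h, Complex.exp_mul_I, ← Complex.ofReal_cos, ← Complex.ofReal_sin, Real.cos_pi_sub,
    Real.sin_pi_sub, Real.cos_pi_div_three, Real.sin_pi_div_three]
  apply Complex.ext <;> simp; norm_num

theorem cubeRoot_eq' : Complex.exp (-(2 * Real.pi * Complex.I) / 3) = ⟨-1 / 2, -(√3 / 2)⟩ := by
  have h : (-(2 * Real.pi * Complex.I) / 3 : ℂ) = ((-(Real.pi - Real.pi / 3) : ℝ) : ℂ) * I := by
    push_cast; ring
  rw [h, Complex.exp_mul_I, ← Complex.ofReal_cos, ← Complex.ofReal_sin, Real.cos_neg, Real.sin_neg,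
    Real.cos_pi_sub, Real.sin_pi_sub, Real.cos_pi_div_three, Real.sin_pi_div_three]
  apply Complex.ext <;> simp; norm_num

theorem cubeRoots_mul {u v : ℂ} (hu : u ∈ cubeRoots) (hv : v ∈ cubeRoots) : u * v ∈ cubeRoots := by
  have h3 : √3 * √3 = 3 := Real.mul_self_sqrt (by norm_num)
  unfold cubeRoots at *
  rw [cubeRoot_eq, cubeRoot_eq'] at *
  simp only [mem_insert_iff, mem_singleton_iff] at *
  rcases hu with rfl | rfl | rfl <;> rcases hv with rfl | rfl | rfl <;>
    simp [Complex.ext_iff] <;> grind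

theorem cubeRoots_norm {u : ℂ} (hu : u ∈ cubeRoots) : ‖u‖ = 1 := by
  have h3 : √3 * √3 = 3 := Real.mul_self_sqrt (by norm_num)
  unfold cubeRoots at hu
  rw [cubeRoot_eq, cubeRoot_eq'] at hu
  simp only [mem_insert_iff, mem_singleton_iff] at hu
  have : ‖u‖ ^ 2 = 1 := by
    rw [Complex.sq_norm, Complex.normSq_apply]
    rcases hu with rfl | rfl | rfl <;> simp <;> grind
  exact (pow_eq_one_iff_of_nonneg (norm_nonneg _) two_ne_zero).mp this

/-- Any point of the disc of radius `2` is moved by some cube root of unity into the disc of radius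
`√3 ≤ 7 / 4`, which leaves room for a perturbation of size `1 / 4`. -/
theorem greedy_step (E a : ℂ) (hE : ‖E‖ ≤ 2) (ha : ‖a‖ ≤ 1 / 4) :
    ∃ u ∈ cubeRoots, ‖E + (u - a)‖ ≤ 2 := by
  have key : ∃ u ∈ cubeRoots, ‖E + u‖ ^ 2 ≤ 3 := by
    have h3 : √3 * √3 = 3 := Real.mul_self_sqrt (by norm_num)
    have hN : E.re * E.re + E.im * E.im ≤ 4 := by
      rw [← Complex.normSq_apply, ← Complex.sq_norm]; nlinarith [norm_nonneg E]
    by_contra! h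
    have h1 := h 1 (by simp [cubeRoots])
    have h2 := h ⟨-1 / 2, √3 / 2⟩ (by rw [← cubeRoot_eq]; simp [cubeRoots])
    have h4 := h ⟨-1 / 2, -(√3 / 2)⟩ (by rw [← cubeRoot_eq']; simp [cubeRoots])
    rw [Complex.sq_norm, Complex.normSq_apply] at h1 h2 h4
    simp only [Complex.add_re, Complex.add_im, Complex.one_re, Complex.one_im] at h1 h2 h4
    set x := E.re
    set y := E.im
    set d := x * x + y * y - 2 with hd
    have e1 : 0 < x + d / 2 := by nlinarith
    have e2 : 0 < (d - x) + √3 * y := by nlinarith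
    have e3 : 0 < (d - x) - √3 * y := by nlinarith
    have e4 : 0 < d - x := by linarith
    have e5 := mul_pos e2 e3
    have e6 := mul_pos e1 e4
    have e7 : 3 * (y * y) < (d - x) ^ 2 := by nlinarith
    have e8 : 3 * (d + 2) < 3 * d ^ 2 := by nlinarith
    have e9 : 0 ≤ (2 - d) * (d + 1) := mul_nonneg (by linarith) (by linarith)
    linarith
  obtain ⟨u, hu, hu2⟩ := key
  refine ⟨u, hu, ?_⟩
  have h1 : ‖E + u‖ ≤ 7 / 4 := by nlinarith [norm_nonneg (E + u)]
  calc ‖E + (u - a)‖ = ‖(E + u) - a‖ := by ring_nf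
    _ ≤ _ := norm_sub_le _ _
    _ ≤ 2 := by linarith

/-- Cube roots of unity `ω p` can be chosen so that the sums of `ω p - A p` over primes stay bounded. -/
theorem greedy (A : ℕ → ℂ) (hA : ∀ p, ‖A p‖ ≤ 1 / 4) :
    ∃ ω : ℕ → ℂ, (∀ p, ω p ∈ cubeRoots) ∧
      ∀ n, ‖∑ p ∈ Finset.range n, if p.Prime then ω p - A p else 0‖ ≤ 2 := by
  classical
  choose pick hpick hpick2 using greedy_step
  let E : ℕ → {z : ℂ // ‖z‖ ≤ 2} := fun n => Nat.rec ⟨0, by simp⟩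
    (fun k e => ⟨e.1 + (if k.Prime then pick e.1 (A k) e.2 (hA k) - A k else 0), by
      split_ifs
      · exact hpick2 _ _ _ _
      · simpa using e.2⟩) n
  refine ⟨fun k => pick (E k).1 (A k) (E k).2 (hA k), fun p => hpick _ _ _ _, fun n => ?_⟩
  have : ∀ n, ∑ p ∈ Finset.range n,
      (if p.Prime then pick (E p).1 (A p) (E p).2 (hA p) - A p else 0) = (E n).1 := by
    intro n
    induction n with
    | zero => rfl
    | succ n ih => rw [Finset.sum_range_succ, ih]
  rw [this]; exact (E n).2

/-- Values at primes extend to a completely multiplicative function, here with the value `0` at `0`. -/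
theorem exists_completelyMultiplicative (ω : ℕ → ℂ) (hω : ∀ p, ω p ∈ cubeRoots) :
    ∃ χ : ℕ → ℂ, CompletelyMultiplicative χ ∧ χ 0 = 0 ∧ (∀ n, 1 ≤ n → χ n ∈ cubeRoots) ∧
      ∀ p, p.Prime → χ p = ω p := by
  classical
  refine ⟨fun n => if n = 0 then 0 else n.factorization.prod fun p k => ω p ^ k, ⟨by simp, ?_⟩,
    by simp, ?_, ?_⟩
  · intro m n
    rcases eq_or_ne m 0 with rfl | hm
    · simp
    rcases eq_or_ne n 0 with rfl | hn
    · simp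
    simp only [mul_eq_zero, hm, hn, or_self, if_false]
    rw [Nat.factorization_mul hm hn, Finsupp.prod_add_index' (by simp) (fun p a b => pow_add _ _ _)]
  · intro n hn
    simp only [show n ≠ 0 by omega, if_false]
    have hpow : ∀ p k : ℕ, ω p ^ k ∈ cubeRoots := by
      intro p k
      induction k with
      | zero => simp [cubeRoots]
      | succ k ih => rw [pow_succ]; exact cubeRoots_mul ih (hω p)
    exact Finset.prod_induction _ (· ∈ cubeRoots) (fun _ _ => cubeRoots_mul) (by simp [cubeRoots])
      fun p _ => hpow p _
  · intro p hp
    simp [hp.ne_zero, hp.factorization]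

theorem natCast_cpow_eq {n : ℕ} (hn : n ≠ 0) (s : ℂ) :
    (n : ℂ) ^ (-s) = cexp (-s * Real.log n) := by
  rw [Complex.cpow_def_of_ne_zero (by exact_mod_cast hn), Complex.natCast_log, mul_comm]

/-- A Dirichlet series whose coefficients have bounded partial sums continues to `Re s > 0`, by
Abel summation: it is `s` times the Mellin transform of a bounded summatory function. -/
theorem abel_extension (c : ℕ → ℂ) (h0 : c 0 = 0) {C : ℝ}
    (hC : ∀ n, ‖∑ k ∈ Finset.range n, c k‖ ≤ C) :
    ∃ G : ℂ → ℂ, DifferentiableOn ℂ G {s | 0 < s.re} ∧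
      ∀ s : ℂ, 1 < s.re → G s = ∑' n, c n * cexp (-s * Real.log n) := by
  set S : ℝ → ℂ := fun t => ∑ k ∈ Finset.Icc 1 ⌊t⌋₊, c k with hS
  have hIcc : ∀ n, ∑ k ∈ Finset.Icc 1 n, c k = ∑ k ∈ Finset.range (n + 1), c k := by
    intro n
    rw [Finset.range_eq_Ico, Finset.sum_eq_sum_Ico_succ_bot (by omega), h0, zero_add]
    rfl
  have hSb : ∀ t, ‖S t‖ ≤ C := fun t => by simp only [hS, hIcc]; exact hC _
  have hSm : Measurable S := by
    have : S = (fun n : ℕ => ∑ k ∈ Finset.Icc 1 n, c k) ∘ (fun t : ℝ => ⌊t⌋₊) := rfl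
    rw [this]
    exact (measurable_of_countable _).comp Nat.measurable_floor
  set f : ℝ → ℂ := (Ioi (1 : ℝ)).indicator S with hf
  have hfb : ∀ t, ‖f t‖ ≤ C := by
    intro t
    refine (norm_indicator_le_norm_self S t).trans (hSb t)
  have hfm : Measurable f := hSm.indicator measurableSet_Ioi
  have hcb : ∀ n, ‖c n‖ ≤ 2 * C := by
    intro n
    have : c n = ∑ k ∈ Finset.range (n + 1), c k - ∑ k ∈ Finset.range n, c k := by
      rw [Finset.sum_range_succ]; ring
    rw [this]
    refine (norm_sub_le _ _).trans ?_
    linarith [hC n, hC (n + 1)]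
  refine ⟨fun s => s * mellin f (-s), ?_, ?_⟩
  · intro s hs
    have hs : 0 < s.re := hs
    have h1 : DifferentiableAt ℂ (mellin f) (-s) := by
      refine mellin_differentiableAt_of_isBigO_rpow (a := 0) (b := -s.re - 1) ?_ ?_ ?_ ?_ ?_
      · refine MeasureTheory.LocallyIntegrable.locallyIntegrableOn ?_ _
        have hloc : MeasureTheory.LocallyIntegrable (fun _ : ℝ => C) := MeasureTheory.locallyIntegrable_const C
        refine hloc.mono hfm.aestronglyMeasurable (Filter.Eventually.of_forall fun t => ?_)
        exact (hfb t).trans (le_abs_self C)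
      · simp only [neg_zero, Real.rpow_zero]
        exact Asymptotics.IsBigO.of_bound C (Filter.Eventually.of_forall fun t => by simpa using hfb t)
      · simpa using hs
      · refine Asymptotics.IsBigO.of_bound 1 ?_
        have : ∀ᶠ t : ℝ in nhdsWithin 0 (Ioi 0), t < 1 :=
          mem_nhdsWithin_of_mem_nhds (Iio_mem_nhds one_pos)
        filter_upwards [this] with t ht
        rw [hf, indicator_of_notMem (by simpa using ht.le)]
        simp
      · simp
    have h2 : DifferentiableAt ℂ (fun s => mellin f (-s)) s := by
      exact DifferentiableAt.comp (g := mellin f) (f := fun s : ℂ => -s) s h1 differentiableAt_id.neg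
    exact (differentiableAt_id.mul h2).differentiableWithinAt
  · intro s hs
    have hsum : LSeriesSummable c s := by
      refine LSeriesSummable_of_bounded_of_one_lt_re (m := 2 * C) (fun n _ => hcb n) hs
    have hL := LSeries_eq_mul_integral c (r := 0) le_rfl (by linarith : (0:ℝ) < s.re) hsum ?_
    · have hm : mellin f (-s) = ∫ t in Ioi (1 : ℝ), S t * (t : ℂ) ^ (-(s + 1)) := by
        rw [mellin, ← MeasureTheory.integral_indicator measurableSet_Ioi,
          ← MeasureTheory.integral_indicator measurableSet_Ioi]
        congr 1
        funext t
        by_cases ht : t ∈ Ioi (1 : ℝ)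
        · have ht0 : t ∈ Ioi (0 : ℝ) := lt_trans one_pos (mem_Ioi.mp ht)
          rw [indicator_of_mem ht0, indicator_of_mem ht, hf, indicator_of_mem ht, smul_eq_mul,
            mul_comm]
          congr 2; ring
        · rw [indicator_of_notMem ht]
          by_cases ht0 : t ∈ Ioi (0 : ℝ)
          · rw [indicator_of_mem ht0, hf, indicator_of_notMem ht, smul_zero]
          · rw [indicator_of_notMem ht0]
      simp only
      rw [hm, ← hL, LSeries]
      refine tsum_congr fun n => ?_
      rcases eq_or_ne n 0 with rfl | hn
      · simp [h0]
      · rw [LSeries.term_of_ne_zero hn, ← natCast_cpow_eq hn, Complex.cpow_neg, div_eq_mul_inv]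
    · simp only [Real.rpow_zero]
      refine Asymptotics.IsBigO.of_bound C (Filter.Eventually.of_forall fun n => ?_)
      simpa [hIcc] using hC (n + 1)

/-! ### Euler product -/

theorem norm_prime_term {u : ℂ} (hu : ‖u‖ = 1) (p : Nat.Primes) (s : ℂ) :
    ‖u * (p : ℂ) ^ (-s)‖ = (p : ℝ) ^ (-s.re) := by
  rw [norm_mul, hu, one_mul, Complex.norm_natCast_cpow_of_pos p.2.pos, Complex.neg_re]

theorem prime_term_le {p : Nat.Primes} {x : ℝ} (hx : 1 / 2 ≤ x) : (p : ℝ) ^ (-x) ≤ 3 / 4 := by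
  have hp : (2 : ℝ) ≤ p := by exact_mod_cast p.2.two_le
  calc (p : ℝ) ^ (-x) ≤ (p : ℝ) ^ (-(1 / 2) : ℝ) :=
        Real.rpow_le_rpow_of_exponent_le (by linarith) (by linarith)
    _ ≤ (2 : ℝ) ^ (-(1 / 2) : ℝ) :=
        Real.rpow_le_rpow_of_nonpos (by norm_num) hp (by norm_num)
    _ ≤ 3 / 4 := by
        rw [Real.rpow_neg (by norm_num), ← Real.sqrt_eq_rpow, inv_le_comm₀ (by positivity) (by norm_num)]
        exact Real.le_sqrt_of_sq_le (by norm_num)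

/-- The contribution of `p ^ 2, p ^ 3, …` to the logarithm of the Euler product converges locally
uniformly on `Re s > 1 / 2`, being dominated by `∑ p ^ (-2 Re s)`. -/
theorem higher_powers_differentiable (χ : ℕ → ℂ) (hχ : ∀ p : Nat.Primes, ‖χ p‖ = 1) :
    DifferentiableOn ℂ (fun s : ℂ => ∑' p : Nat.Primes,
      (-log (1 - χ p * (p : ℂ) ^ (-s)) - χ p * (p : ℂ) ^ (-s))) {s : ℂ | 1 / 2 < s.re} := by
  intro s hs
  obtain ⟨σ, hσ, hσs⟩ : ∃ σ : ℝ, 1 / 2 < σ ∧ σ < s.re := exists_between hs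
  have hopen : IsOpen {z : ℂ | σ < z.re} := isOpen_lt continuous_const Complex.continuous_re
  have hmain : DifferentiableOn ℂ (fun s : ℂ => ∑' p : Nat.Primes,
      (-log (1 - χ p * (p : ℂ) ^ (-s)) - χ p * (p : ℂ) ^ (-s))) {s : ℂ | σ < s.re} := by
    refine Complex.differentiableOn_tsum_of_summable_norm
      (u := fun p : Nat.Primes => 2 * (p : ℝ) ^ (-(2 * σ))) ?_ ?_ hopen ?_
    · exact (Nat.Primes.summable_rpow.mpr (by linarith)).mul_left 2
    · intro p z hz
      have hz : σ < z.re := hz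
      have hd : DifferentiableAt ℂ (fun z : ℂ => χ p * (p : ℂ) ^ (-z)) z := by
        refine DifferentiableAt.const_mul ?_ _
        exact (differentiableAt_id.neg).const_cpow (Or.inl (by exact_mod_cast p.2.ne_zero))
      have hn := norm_prime_term (hχ p) p z
      have hlt : ‖χ p * (p : ℂ) ^ (-z)‖ < 1 := by
        rw [hn]; exact (prime_term_le (by linarith)).trans_lt (by norm_num)
      refine DifferentiableAt.differentiableWithinAt ?_
      refine ((DifferentiableAt.clog ?_ ?_).neg).sub hd
      · exact (differentiableAt_const _).sub hd
      · rw [sub_eq_add_neg]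
        exact Complex.mem_slitPlane_of_norm_lt_one (by rwa [norm_neg])
    · intro p z hz
      have hz : σ < z.re := hz
      have hn := norm_prime_term (hχ p) p z
      have hle : ‖χ p * (p : ℂ) ^ (-z)‖ ≤ 3 / 4 := by
        rw [hn]; exact prime_term_le (by linarith)
      set w := χ p * (p : ℂ) ^ (-z) with hw
      have h1 := Complex.norm_log_one_add_sub_self_le (z := -w) (by rw [norm_neg]; linarith)
      rw [norm_neg] at h1
      have h2 : ‖-log (1 - w) - w‖ = ‖log (1 + -w) - -w‖ := by
        rw [← norm_neg, ← sub_eq_add_neg]; congr 1; ring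
      rw [h2]
      have h3 : (1 - ‖w‖)⁻¹ ≤ 4 := by
        rw [inv_le_comm₀ (by linarith) (by norm_num)]; linarith
      have hp : (1 : ℝ) ≤ p := by exact_mod_cast p.2.one_lt.le
      have h4 : ‖w‖ ^ 2 ≤ (p : ℝ) ^ (-(2 * σ)) := by
        rw [hn, ← Real.rpow_natCast, ← Real.rpow_mul (by linarith)]
        refine Real.rpow_le_rpow_of_exponent_le hp ?_
        push_cast; linarith
      calc ‖log (1 + -w) - -w‖ ≤ ‖w‖ ^ 2 * (1 - ‖w‖)⁻¹ / 2 := h1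
        _ ≤ (p : ℝ) ^ (-(2 * σ)) * 4 / 2 := by
          have : 0 ≤ (1 - ‖w‖)⁻¹ := inv_nonneg.mpr (by linarith)
          gcongr
        _ = _ := by ring
  exact (hmain.differentiableAt (hopen.mem_nhds hσs)).differentiableWithinAt

theorem summable_exp_log {c : ℕ → ℂ} (h0 : c 0 = 0) {C : ℝ} (hC : ∀ n, ‖c n‖ ≤ C) {s : ℂ}
    (hs : 1 < s.re) : Summable fun n : ℕ => c n * cexp (-s * Real.log n) := by
  have h := LSeriesSummable_of_bounded_of_one_lt_re (f := c) (m := C) (fun n _ => hC n) hs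
  refine h.congr fun n => ?_
  rcases eq_or_ne n 0 with rfl | hn
  · simp [h0]
  · rw [LSeries.term_of_ne_zero hn, ← natCast_cpow_eq hn, Complex.cpow_neg, div_eq_mul_inv]

/-- If the prime coefficients `A p` are bounded by `1 / 4`, some cubic Helson zeta function equals
`exp (∑ A p p^{-s})` up to a factor `exp H` with `H` holomorphic on `Re s > 1 / 2`. -/
theorem euler_extension (A : ℕ → ℂ) (hA : ∀ p, ‖A p‖ ≤ 1 / 4) (hA0 : ∀ p, ¬ p.Prime → A p = 0) :
    ∃ (χ : ℕ → ℂ) (H : ℂ → ℂ), CompletelyMultiplicative χ ∧ (∀ n, 1 ≤ n → χ n ∈ cubeRoots) ∧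
      DifferentiableOn ℂ H {s | 1 / 2 < s.re} ∧
      ∀ s : ℂ, 1 < s.re →
        helsonZeta χ s = cexp (∑' p, A p * cexp (-s * Real.log p) + H s) := by
  classical
  obtain ⟨ω, hω, hgr⟩ := greedy A hA
  obtain ⟨χ, hχ, hχ0, hχv, hχp⟩ := exists_completelyMultiplicative ω hω
  set c : ℕ → ℂ := fun p => if p.Prime then ω p - A p else 0 with hc
  have hc0 : c 0 = 0 := by simp [hc, Nat.not_prime_zero]
  obtain ⟨G, hG, hGs⟩ := abel_extension c hc0 hgr
  have hχn : ∀ p : Nat.Primes, ‖χ p‖ = 1 := fun p => cubeRoots_norm (hχv p p.2.one_lt.le)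
  have hR := higher_powers_differentiable χ hχn
  refine ⟨χ, _, hχ, hχv, (hG.mono ?_).add hR, ?_⟩
  · intro s hs
    have hs : 1 / 2 < s.re := hs
    show 0 < s.re
    linarith
  intro s hs
  have hs0 : s ≠ 0 := fun h => by simp [h] at hs; linarith
  set f : ℕ →*₀ ℂ :=
    { toFun := fun n => χ n * (n : ℂ) ^ (-s)
      map_zero' := by simp [hχ0]
      map_one' := by simp [hχ.1]
      map_mul' := fun m n => by
        rw [hχ.2, Nat.cast_mul, Complex.natCast_mul_natCast_cpow]; ring } with hf
  have hfv : ∀ n : ℕ, f n = χ n * (n : ℂ) ^ (-s) := fun n => rfl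
  have hχb : ∀ n, ‖χ n‖ ≤ 1 := by
    intro n
    rcases eq_or_ne n 0 with rfl | hn
    · simp [hχ0]
    · exact (cubeRoots_norm (hχv n (by omega))).le
  have hχsum : Summable fun n : ℕ => χ n * cexp (-s * Real.log n) := summable_exp_log hχ0 hχb hs
  have hfe : ∀ n, f n = χ n * cexp (-s * Real.log n) := by
    intro n
    rcases eq_or_ne n 0 with rfl | hn
    · simp [hχ0]
    · rw [hfv, natCast_cpow_eq hn]
  have hfs : Summable (f ·) := hχsum.congr fun n => (hfe n).symm
  have hzeta : helsonZeta χ s = ∑' n, f n := by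
    rw [hfs.tsum_eq_zero_add, map_zero, zero_add, helsonZeta]
    refine tsum_congr fun n => ?_
    rw [hfv]; push_cast; rfl
  have hAs : Summable fun n : ℕ => A n * cexp (-s * Real.log n) :=
    summable_exp_log (hA0 0 Nat.not_prime_zero) hA hs
  have hcs : Summable fun n : ℕ => c n * cexp (-s * Real.log n) := by
    refine summable_exp_log hc0 (C := 2) (fun n => ?_) hs
    simp only [hc]
    split_ifs with h
    · refine (norm_sub_le _ _).trans ?_
      rw [cubeRoots_norm (hω n)]; linarith [hA n]
    · simp
  have hprimes : ∑' p, A p * cexp (-s * Real.log p) + G s = ∑' p : Nat.Primes, f p := by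
    rw [hGs s hs, ← hAs.tsum_add hcs]
    have h1 : ∀ n : ℕ, A n * cexp (-s * Real.log n) + c n * cexp (-s * Real.log n) =
        {p : ℕ | p.Prime}.indicator (f ·) n := by
      intro n
      by_cases hn : n.Prime
      · rw [indicator_of_mem (by exact hn), hfe, hχp n hn]
        simp only [hc, hn, if_true]; ring
      · rw [indicator_of_notMem (by exact hn)]
        simp [hc, hn, hA0 n hn]
    simp_rw [h1]
    exact (tsum_subtype {p : ℕ | p.Prime} (f ·)).symm
  have hfP : Summable fun p : Nat.Primes => f p := hfs.subtype {p : ℕ | p.Prime}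
  have hlogs : Summable fun p : Nat.Primes => -log (1 - f p) := by
    have h := (Complex.summable_log_one_add_of_summable hfP.neg).neg
    refine h.congr fun p => ?_
    rw [sub_eq_add_neg]
  rw [hzeta, ← EulerProduct.exp_tsum_primes_log_eq_tsum hfs.norm]
  congr 1
  simp only [Pi.add_apply]
  rw [← add_assoc, hprimes]
  simp_rw [← hfv]
  rw [← hfP.tsum_add (hlogs.sub hfP)]
  refine tsum_congr fun p => ?_
  ring

/-! ### Weierstrass factors and exhaustion of the strip -/

theorem neg_log_eq_add_logTail (q : ℕ) {z : ℂ} (hz : ‖z‖ < 1) :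
    -log (1 - z) = ∑ k ∈ Finset.range q, z ^ k / (k : ℂ) + logTail q z := by
  have h := Complex.hasSum_taylorSeries_neg_log hz
  rw [← h.tsum_eq, ← h.summable.sum_add_tsum_nat_add q, logTail]

/-- The nonvanishing cofactor of `s - ρ` in the factor `(1 - z) exp (∑_{k < q} z ^ k / k) exp (e s)`,
where `z = 1 / (1 + s - ρ)`, using `1 - z = (s - ρ) / (1 + s - ρ)`. The term `k = 0` of the sum is `0`. -/
noncomputable def factorUnit (ρ : ℂ) (q : ℕ) (e : ℂ → ℂ) (s : ℂ) : ℂ :=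
  cexp (∑ k ∈ Finset.range q, (1 / (1 + s - ρ)) ^ k / (k : ℂ) + e s) / (1 + s - ρ)

theorem factor_eq_exp {ρ s : ℂ} (q : ℕ) (e : ℂ → ℂ) (n : ℤ) (h0 : 1 + s - ρ ≠ 0)
    (h1 : ‖1 / (1 + s - ρ)‖ < 1) :
    ((s - ρ) * factorUnit ρ q e s) ^ n = cexp (-n * (logTail q (1 / (1 + s - ρ)) - e s)) := by
  have hne : 1 - 1 / (1 + s - ρ) ≠ 0 := by
    intro h
    rw [← sub_eq_zero.mp h] at h1
    simp at h1
  have h2 := neg_log_eq_add_logTail q h1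
  have h3 : (s - ρ) * factorUnit ρ q e s = cexp (-(logTail q (1 / (1 + s - ρ)) - e s)) := by
    have h4 : -(logTail q (1 / (1 + s - ρ)) - e s) = log (1 - 1 / (1 + s - ρ)) +
        (∑ k ∈ Finset.range q, (1 / (1 + s - ρ)) ^ k / (k : ℂ) + e s) := by
      linear_combination h2
    rw [h4, Complex.exp_add, Complex.exp_log hne, factorUnit]
    field_simp
    ring
  rw [h3, ← Complex.exp_int_mul]
  congr 1; ring

theorem factorUnit_ne_zero {ρ s : ℂ} (q : ℕ) (e : ℂ → ℂ) (h0 : 1 + s - ρ ≠ 0) :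
    factorUnit ρ q e s ≠ 0 := div_ne_zero (Complex.exp_ne_zero _) h0

theorem factorUnit_differentiableAt {ρ s : ℂ} (q : ℕ) {e : ℂ → ℂ} (he : Differentiable ℂ e)
    (h0 : 1 + s - ρ ≠ 0) : DifferentiableAt ℂ (factorUnit ρ q e) s := by
  have h1 : DifferentiableAt ℂ (fun s => 1 + s - ρ) s := by fun_prop
  have h2 : DifferentiableAt ℂ (fun s => 1 / (1 + s - ρ)) s := (differentiableAt_const _).div h1 h0
  unfold factorUnit
  refine DifferentiableAt.div (DifferentiableAt.cexp (DifferentiableAt.add ?_ (he s))) h1 h0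
  refine DifferentiableAt.fun_sum fun k _ => ?_
  exact (h2.pow k).div_const _

theorem logTail_differentiableAt {ρ s : ℂ} (q : ℕ) (h0 : 1 + s - ρ ≠ 0)
    (h1 : ‖1 / (1 + s - ρ)‖ < 1) :
    DifferentiableAt ℂ (fun s => logTail q (1 / (1 + s - ρ))) s := by
  have h2 : DifferentiableAt ℂ (fun s => 1 / (1 + s - ρ)) s :=
    (differentiableAt_const _).div (by fun_prop) h0
  have h3 : ∀ᶠ z in nhds s, ‖1 / (1 + z - ρ)‖ < 1 :=
    h2.continuousAt.norm.eventually (gt_mem_nhds h1)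
  have h4 : DifferentiableAt ℂ (fun s => -log (1 - 1 / (1 + s - ρ)) -
      ∑ k ∈ Finset.range q, (1 / (1 + s - ρ)) ^ k / (k : ℂ)) s := by
    refine DifferentiableAt.sub (DifferentiableAt.neg (DifferentiableAt.clog ?_ ?_)) ?_
    · exact (differentiableAt_const _).sub h2
    · rw [sub_eq_add_neg]
      exact Complex.mem_slitPlane_of_norm_lt_one (by rwa [norm_neg])
    · exact DifferentiableAt.fun_sum fun k _ => (h2.pow k).div_const _
  refine h4.congr_of_eventuallyEq ?_
  filter_upwards [h3] with z hz
  rw [neg_log_eq_add_logTail q hz]; ring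

theorem one_add_sub_ne_zero {ρ s : ℂ} (h : ρ.re < 1 + s.re) : 1 + s - ρ ≠ 0 := by
  intro h0
  have := congrArg Complex.re h0
  simp at this; linarith

theorem norm_one_div_lt_one {ρ s : ℂ} (h : ρ.re < s.re) : ‖1 / (1 + s - ρ)‖ < 1 := by
  have h1 : 1 < (1 + s - ρ).re := by simp; linarith
  have h2 : 1 < ‖1 + s - ρ‖ := h1.trans_le (Complex.re_le_norm _)
  rw [norm_div, norm_one, div_lt_one (by linarith)]; exact h2

/-- The points of `S` in the `K`-th of an increasing sequence of boxes that exhaust the strip. -/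
def truncation (S : Set ℂ) (K : ℕ) : Set ℂ :=
  {ρ ∈ S | 21 / 40 + 1 / (2 * ((K : ℝ) + 1)) ≤ ρ.re ∧ |ρ.im| ≤ K + 2}

theorem truncation_finite (S : Set ℂ) (hS : ∀ ρ ∈ S, 21 / 40 < ρ.re ∧ ρ.re < 1)
    (hacc : ∀ z : ℂ, z.re ≠ 21 / 40 → ¬ AccPt z (𝓟 S)) (K : ℕ) : (truncation S K).Finite := by
  by_contra hinf
  set Q : Set ℂ := Icc (21 / 40 + 1 / (2 * ((K : ℝ) + 1))) 1 ×ℂ Icc (-(K + 2 : ℝ)) (K + 2) with hQ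
  have hQc : IsCompact Q := isCompact_Icc.reProdIm isCompact_Icc
  obtain ⟨z, hz, hzacc⟩ := Set.Infinite.exists_accPt_of_subset_isCompact hinf hQc (by
    rintro ρ ⟨hρ, h1, h2⟩
    exact ⟨⟨h1, (hS ρ hρ).2.le⟩, abs_le.mp h2⟩)
  refine hacc z ?_ (hzacc.mono (principal_mono.mpr fun ρ h => h.1))
  have h1 : 21 / 40 + 1 / (2 * ((K : ℝ) + 1)) ≤ z.re := hz.1.1
  have : 0 < 1 / (2 * ((K : ℝ) + 1)) := by positivity
  linarith

theorem truncation_exhausts {s : ℂ} (hs : 21 / 40 < s.re) :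
    ∃ K : ℕ, ‖s‖ < K ∧ 21 / 40 + 1 / ((K : ℝ) + 1) < s.re := by
  have h1 : ∀ᶠ K : ℕ in atTop, ‖s‖ < K :=
    tendsto_natCast_atTop_atTop.eventually (eventually_gt_atTop _)
  have h2 : ∀ᶠ K : ℕ in atTop, 1 / ((K : ℝ) + 1) < s.re - 21 / 40 :=
    tendsto_one_div_add_atTop_nhds_zero_nat.eventually (gt_mem_nhds (by linarith))
  obtain ⟨K, hK1, hK2⟩ := (h1.and h2).exists
  exact ⟨K, hK1, by linarith⟩

theorem mem_truncation {S : Set ℂ} {s : ℂ} (hs : s ∈ S) {K : ℕ} (h1 : ‖s‖ < K)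
    (h2 : 21 / 40 + 1 / ((K : ℝ) + 1) < s.re) : s ∈ truncation S K := by
  refine ⟨hs, ?_, ?_⟩
  · refine le_trans ?_ h2.le
    gcongr
    have : (0 : ℝ) ≤ K := Nat.cast_nonneg K
    linarith
  · have := Complex.abs_im_le_norm s
    linarith

/-- Points `ρ` of `S` outside the `K`-th box are harmless on the domain `‖s‖ < K`,
`Re s > 21 / 40 + 1 / (K + 1)`: there the estimates of `point_factor` hold with parameters `R` and `η`
that depend on `ρ` alone and not on `K`. -/
theorem truncation_separation {S : Set ℂ} {ρ : ℂ} (hρS : ρ ∈ S) (hρ : 21 / 40 < ρ.re ∧ ρ.re < 1)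
    {K : ℕ} (hK : ρ ∉ truncation S K) {s : ℂ} (h1 : ‖s‖ < K)
    (h2 : 21 / 40 + 1 / ((K : ℝ) + 1) < s.re) :
    ‖s‖ ≤ 1 / (ρ.re - 21 / 40) + |ρ.im| ∧ (ρ.re - 21 / 40 ≤ s.re - ρ.re ∨
      (1 ≤ |s.im - ρ.im| ∧ -(1 / 2) ≤ s.re - ρ.re)) := by
  have hd : 0 < ρ.re - 21 / 40 := by linarith
  have hK0 : (0 : ℝ) ≤ K := Nat.cast_nonneg K
  have hKp : 0 < 1 / ((K : ℝ) + 1) := by positivity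
  by_cases hre : 21 / 40 + 1 / (2 * ((K : ℝ) + 1)) ≤ ρ.re
  · have him : (K : ℝ) + 2 < |ρ.im| := by
      by_contra! h
      exact hK ⟨hρS, hre, h⟩
    refine ⟨?_, Or.inr ⟨?_, ?_⟩⟩
    · have : 0 < 1 / (ρ.re - 21 / 40) := by positivity
      linarith
    · have := Complex.abs_im_le_norm s
      have h3 := abs_sub_abs_le_abs_sub ρ.im s.im
      rw [abs_sub_comm]; linarith
    · linarith
  · push Not at hre
    have h4 : 1 / (2 * ((K : ℝ) + 1)) = 1 / ((K : ℝ) + 1) / 2 := by field_simp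
    rw [h4] at hre
    refine ⟨?_, Or.inl (by linarith)⟩
    have h5 : ρ.re - 21 / 40 ≤ 1 / ((K : ℝ) + 1) := by linarith
    have h6 : (K : ℝ) + 1 ≤ 1 / (ρ.re - 21 / 40) := by
      rw [le_div_iff₀ hd]
      calc ((K : ℝ) + 1) * (ρ.re - 21 / 40) ≤ ((K : ℝ) + 1) * (1 / ((K : ℝ) + 1)) := by gcongr
        _ = 1 := by field_simp
    linarith [abs_nonneg ρ.im]

/-! ### The product with the prescribed divisor -/

theorem weight_le {ε : ℝ} (hε : 0 ≤ ε) (n : ℤ) {x : ℂ} {c : ℝ} (hc : 0 ≤ c)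
    (hx : ‖x‖ ≤ c * (ε / (1 + |(n : ℝ)|))) : ‖-(n : ℂ) * x‖ ≤ c * ε := by
  have h0 : 0 ≤ |(n : ℝ)| := abs_nonneg _
  rw [norm_mul, norm_neg, Complex.norm_intCast]
  calc |(n : ℝ)| * ‖x‖ ≤ |(n : ℝ)| * (c * (ε / (1 + |(n : ℝ)|))) := by gcongr
    _ = c * ε * (|(n : ℝ)| / (1 + |(n : ℝ)|)) := by ring
    _ ≤ c * ε * 1 := by
        gcongr
        rw [div_le_one (by linarith)]; linarith
    _ = _ := by ring

/-- A meromorphic function `M` on `Re s > 21 / 40` with order `n s` at each point `s`, which is the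
exponential of a Dirichlet series over primes with coefficients bounded by `1 / 4` for `Re s > 1`. -/
theorem canonical_product (S : Set ℂ) (n : ℂ → ℤ) (hn : ∀ s, s ∉ S → n s = 0)
    (hS : ∀ ρ ∈ S, 21 / 40 < ρ.re ∧ ρ.re < 1)
    (hacc : ∀ z : ℂ, z.re ≠ 21 / 40 → ¬ AccPt z (𝓟 S)) :
    ∃ (A : ℕ → ℂ) (M : ℂ → ℂ), (∀ p, ‖A p‖ ≤ 1 / 4) ∧ (∀ p, ¬ p.Prime → A p = 0) ∧
      (∀ s : ℂ, 1 < s.re → M s = cexp (∑' p, A p * cexp (-s * Real.log p))) ∧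
      ∀ s : ℂ, 21 / 40 < s.re → ∃ g : ℂ → ℂ, AnalyticAt ℂ g s ∧ g s ≠ 0 ∧
        ∀ᶠ z in nhds s, M z = (z - s) ^ (n s) * g z := by
  classical
  have hfin := truncation_finite S hS hacc
  have hcount : S.Countable := by
    refine (countable_iUnion fun K => (hfin K).countable).mono fun s hs => ?_
    obtain ⟨K, hK1, hK2⟩ := truncation_exhausts (hS s hs).1
    exact mem_iUnion.mpr ⟨K, mem_truncation hs hK1 hK2⟩
  have : Countable S := hcount
  obtain ⟨ε, hε, hεsum⟩ : ∃ ε : S → ℝ, (∀ i, 0 < ε i) ∧ Summable ε ∧ ∑' i, ε i ≤ 1 / 4 := by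
    have : Encodable S := Encodable.ofCountable S
    obtain ⟨ε, h1, c, hc, hc2⟩ := posSumOfEncodable (ε := 1 / 4) (by norm_num) S
    exact ⟨ε, h1, hc.summable, hc.tsum_eq.trans_le hc2⟩
  obtain ⟨hεs, hε4⟩ := hεsum
  have hw : ∀ i : S, 0 < ε i / (1 + |(n i : ℝ)|) := fun i => by have := hε i; positivity
  choose q a e hq ha0 hab hediff hebd hident hsmall using fun i : S =>
    point_factor i.1 (hS i i.2).2 (1 / (i.1.re - 21 / 40) + |i.1.im|) (i.1.re - 21 / 40)
      (ε i / (1 + |(n i : ℝ)|)) (by linarith [(hS i i.2).1]) (hw i)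
  set T : S → ℂ → ℂ := fun i s => logTail (q i) (1 / (1 + s - i.1)) with hT
  set x : S → ℂ → ℂ := fun i s => -(n i : ℂ) * (T i s - e i s) with hx
  set f : S → ℂ → ℂ := fun i s => ((s - i.1) * factorUnit i.1 (q i) (e i) s) ^ (n i) with hf
  have hne : ∀ (i : S) {s : ℂ}, 21 / 40 < s.re → 1 + s - i.1 ≠ 0 := fun i s hs =>
    one_add_sub_ne_zero (by linarith [(hS i i.2).2])
  have hfx : ∀ (i : S) (s : ℂ), 1 + s - i.1 ≠ 0 → ‖1 / (1 + s - i.1)‖ < 1 →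
      f i s = cexp (x i s) := fun i s h0 h1 => factor_eq_exp _ _ _ h0 h1
  have hna : ∀ (i : S) (p : ℕ), ‖-(n i : ℂ) * a i p‖ ≤ ε i := by
    intro i p
    simpa using weight_le (hε i).le (n i) zero_le_one (by simpa using hab i p)
  set A : ℕ → ℂ := fun p => ∑' i : S, -(n i : ℂ) * a i p with hA
  refine ⟨A, fun s => ∏' i, f i s, fun p => ?_, fun p hp => ?_, fun s hs => ?_, fun s hs => ?_⟩
  · exact (tsum_of_norm_bounded hεs.hasSum fun i => hna i p).trans hε4
  · simp [hA, ha0 _ p hp]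
  -- Both sides are the exponential of one absolutely convergent double series over `S × ℕ`.
  · have hb : Summable fun p : ℕ => ‖cexp (-s * Real.log p)‖ := by
      have h1 := (summable_nat_add_iff 1).mpr (Real.summable_nat_rpow.mpr (by linarith : -s.re < -1))
      refine (summable_nat_add_iff 1).mp (h1.congr fun p => ?_)
      rw [← natCast_cpow_eq (by omega), Complex.norm_natCast_cpow_of_pos (by omega), Complex.neg_re]
    have hdouble : Summable fun z : S × ℕ =>
        (-(n z.1 : ℂ) * a z.1 z.2) * cexp (-s * Real.log z.2) := by
      refine Summable.of_norm_bounded (hεs.mul_of_nonneg hb (fun i => (hε i).le)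
        (fun p => norm_nonneg _)) fun z => ?_
      rw [norm_mul]
      gcongr
      exact hna _ _
    have hxs : ∀ i, x i s = ∑' p, (-(n i : ℂ) * a i p) * cexp (-s * Real.log p) := by
      intro i
      simp only [hx, hT]
      rw [hident i s hs, add_sub_cancel_right, ← tsum_mul_left]
      exact tsum_congr fun p => by ring
    have hfxs : ∀ i, f i s = cexp (x i s) := fun i =>
      hfx i s (hne i (by linarith)) (norm_one_div_lt_one (by linarith [(hS i i.2).2]))
    have hxsum : Summable fun i => x i s := by
      simp_rw [hxs]
      exact hdouble.prod
    have hprod := hxsum.hasSum.cexp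
    have hprod2 : ∏' i, f i s = cexp (∑' i, x i s) := by
      simp_rw [hfxs]
      exact hprod.tprod_eq
    show ∏' i, f i s = _
    rw [hprod2]
    congr 1
    simp_rw [hxs]
    rw [← Summable.tsum_comm (f := fun (i : S) (p : ℕ) =>
      (-(n i : ℂ) * a i p) * cexp (-s * Real.log p)) hdouble]
    refine tsum_congr fun p => ?_
    rw [hA, tsum_mul_right]
  -- On `U` the product splits into finitely many factors and the exponential of a convergent series.
  · obtain ⟨K, hK1, hK2⟩ := truncation_exhausts hs
    set U : Set ℂ := {z | ‖z‖ < K ∧ 21 / 40 + 1 / ((K : ℝ) + 1) < z.re} with hU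
    have hUo : IsOpen U := (isOpen_lt continuous_norm continuous_const).inter
      (isOpen_lt continuous_const Complex.continuous_re)
    have hsU : s ∈ U := ⟨hK1, hK2⟩
    have hUre : ∀ z ∈ U, 21 / 40 < z.re := fun z hz => by
      have : 0 < 1 / ((K : ℝ) + 1) := by positivity
      linarith [hz.2]
    have hBf : {i : S | i.1 ∈ truncation S K}.Finite :=
      (hfin K).preimage Subtype.val_injective.injOn
    set B : Finset S := hBf.toFinset with hB
    have hBmem : ∀ i, i ∈ B ↔ i.1 ∈ truncation S K := fun i => by simp [hB]
    have hsep : ∀ i : ((B : Set S)ᶜ : Set S), ∀ z ∈ U, _ := fun i z hz =>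
      truncation_separation (S := S) i.1.2 (hS _ i.1.2) (K := K)
        (fun h => i.2 ((hBmem i.1).mpr h)) hz.1 hz.2
    have hxb : ∀ i : ((B : Set S)ᶜ : Set S), ∀ z ∈ U, ‖x i z‖ ≤ 2 * ε i := by
      intro i z hz
      obtain ⟨h1, h2⟩ := hsep i z hz
      refine weight_le (hε i).le _ zero_le_two ?_
      refine (norm_sub_le _ _).trans ?_
      rw [two_mul]
      exact add_le_add (hsmall i z h2).2 (hebd i z h1)
    have hsum2 : Summable fun i : ((B : Set S)ᶜ : Set S) => 2 * ε i :=
      (hεs.mul_left 2).subtype _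
    have hXd : DifferentiableOn ℂ (fun z => ∑' i : ((B : Set S)ᶜ : Set S), x i z) U := by
      refine Complex.differentiableOn_tsum_of_summable_norm hsum2 (fun i z hz => ?_) hUo hxb
      obtain ⟨h1, h2⟩ := hsep i z hz
      exact (((logTail_differentiableAt _ (hne i (hUre z hz)) (hsmall i z h2).1).sub
        (hediff i z)).const_mul _).differentiableWithinAt
    have hMz : ∀ z ∈ U, ∏' i, f i z =
        (∏ i ∈ B, f i z) * cexp (∑' i : ((B : Set S)ᶜ : Set S), x i z) := by
      intro z hz
      have h1 : HasProd (fun i : (B : Set S) => f i z) (∏ i ∈ B, f i z) :=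
        B.hasProd (fun i => f i z)
      have hxsum : Summable fun i : ((B : Set S)ᶜ : Set S) => x i z :=
        Summable.of_norm_bounded hsum2 fun i => hxb i z hz
      have h2 : HasProd (fun i : ((B : Set S)ᶜ : Set S) => f i z)
          (cexp (∑' i : ((B : Set S)ᶜ : Set S), x i z)) := by
        have h3 := hxsum.hasSum.cexp
        have h4 : (fun i : ((B : Set S)ᶜ : Set S) => f i z) =
            cexp ∘ (fun i : ((B : Set S)ᶜ : Set S) => x i z) := by
          funext i
          exact hfx i z (hne i (hUre z hz)) (hsmall i z (hsep i z hz).2).1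
        rw [h4]; exact h3
      exact (HasProd.mul_compl (f := fun i => f i z) (s := (B : Set S)) h1 h2).tprod_eq
    set B' : Finset S := B.filter (fun i => i.1 ≠ s) with hB'
    set g0 : ℂ → ℂ := fun z => if hsS : s ∈ S then
      factorUnit s (q ⟨s, hsS⟩) (e ⟨s, hsS⟩) z ^ (n s) else 1 with hg0
    have hg0s : g0 s ≠ 0 := by
      simp only [hg0]
      split_ifs with h
      · exact zpow_ne_zero _ (factorUnit_ne_zero _ _ (hne ⟨s, h⟩ hs))
      · exact one_ne_zero
    have hg0d : ∀ᶠ z in nhds s, DifferentiableAt ℂ g0 z := by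
      filter_upwards [hUo.mem_nhds hsU] with z hz
      simp only [hg0]
      split_ifs with h
      · exact (factorUnit_differentiableAt _ (hediff _) (hne ⟨s, h⟩ (hUre z hz))).zpow
          (Or.inl (factorUnit_ne_zero _ _ (hne ⟨s, h⟩ (hUre z hz))))
      · exact differentiableAt_const _
    have hfac : ∀ z, ∏ i ∈ B, f i z = (z - s) ^ (n s) * g0 z * ∏ i ∈ B', f i z := by
      intro z
      by_cases h : s ∈ S
      · have hsB : (⟨s, h⟩ : S) ∈ B := (hBmem _).mpr (mem_truncation h hK1 hK2)
        have hBe : B' = B.erase ⟨s, h⟩ := by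
          ext i
          simp only [hB', Finset.mem_filter, Finset.mem_erase, ne_eq, Subtype.ext_iff]
          tauto
        rw [hBe, ← Finset.mul_prod_erase B _ hsB]
        simp only [hg0, h, dif_pos, hf, mul_zpow]
      · have hBe : B' = B := by
          refine Finset.filter_true_of_mem fun i _ => ?_
          rintro rfl
          exact h i.2
        simp [hBe, hg0, h, hn s h]
    refine ⟨fun z => g0 z * (∏ i ∈ B', f i z) *
      cexp (∑' i : ((B : Set S)ᶜ : Set S), x i z), ?_, ?_, ?_⟩
    · refine (AnalyticAt.mul (AnalyticAt.mul ?_ ?_) ?_)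
      · exact Complex.analyticAt_iff_eventually_differentiableAt.mpr hg0d
      · refine Finset.analyticAt_fun_prod _ fun i hi => ?_
        have his : s - i.1 ≠ 0 := sub_ne_zero.mpr fun h => (Finset.mem_filter.mp hi).2 h.symm
        refine AnalyticAt.zpow (AnalyticAt.mul (by fun_prop) ?_)
          (mul_ne_zero his (factorUnit_ne_zero _ _ (hne i hs)))
        refine Complex.analyticAt_iff_eventually_differentiableAt.mpr ?_
        filter_upwards [hUo.mem_nhds hsU] with z hz
        exact factorUnit_differentiableAt _ (hediff _) (hne i (hUre z hz))
      · exact (hXd.analyticAt (hUo.mem_nhds hsU)).cexp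
    · refine mul_ne_zero (mul_ne_zero hg0s ?_) (Complex.exp_ne_zero _)
      refine Finset.prod_ne_zero_iff.mpr fun i hi => zpow_ne_zero _ (mul_ne_zero ?_
        (factorUnit_ne_zero _ _ (hne i hs)))
      exact sub_ne_zero.mpr fun h => (Finset.mem_filter.mp hi).2 h.symm
    · filter_upwards [hUo.mem_nhds hsU] with z hz
      rw [hMz z hz, hfac]; ring

/-! ### Prescribed zeros and poles -/

theorem helson_zeta_prescribed_zeros_poles_cubic
    (SZ SP : Set ℂ) (mZ mP : ℂ → ℕ)
    (hZstrip : ∀ s ∈ SZ, 21 / 40 < s.re ∧ s.re < 1)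
    (hPstrip : ∀ s ∈ SP, 21 / 40 < s.re ∧ s.re < 1)
    (hmZ : ∀ s ∈ SZ, 1 ≤ mZ s) (hmP : ∀ s ∈ SP, 1 ≤ mP s)
    (hdisj : Disjoint SZ SP)
    (hacc : ∀ z : ℂ, z.re ≠ 21 / 40 → ¬ AccPt z (𝓟 (SZ ∪ SP))) :
    ∃ (χ : ℕ → ℂ) (F : ℂ → ℂ),
      CompletelyMultiplicative χ ∧
      (∀ n : ℕ, 1 ≤ n → χ n ∈ ({1, Complex.exp (2 * Real.pi * Complex.I / 3),
          Complex.exp (-(2 * Real.pi * Complex.I) / 3)} : Set ℂ)) ∧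
      MeromorphicOn F {s : ℂ | 21 / 40 < s.re} ∧
      (∀ s : ℂ, 1 < s.re → F s = helsonZeta χ s) ∧
      AnalyticOnNhd ℂ F ({s : ℂ | 21 / 40 < s.re} \ SP) ∧
      (∀ s : ℂ, 21 / 40 < s.re → s ∉ SP → (F s = 0 ↔ s ∈ SZ)) ∧
      (∀ s ∈ SZ, ZeroOfOrder F s (mZ s)) ∧
      (∀ s ∈ SP, PoleOfOrder F s (mP s)) := by
  classical
  set n : ℂ → ℤ := fun s => if s ∈ SZ then (mZ s : ℤ) else if s ∈ SP then -(mP s : ℤ) else 0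
    with hn
  have hnZ : ∀ s ∈ SZ, n s = mZ s := fun s hs => by simp [hn, hs]
  have hnP : ∀ s ∈ SP, n s = -(mP s : ℤ) := fun s hs => by
    have hsZ : s ∉ SZ := fun h => Set.disjoint_left.mp hdisj h hs
    simp [hn, hs, hsZ]
  have hn0 : ∀ s, s ∉ SZ → s ∉ SP → n s = 0 := fun s h1 h2 => by simp [hn, h1, h2]
  obtain ⟨A, M, hA, hA0, hM, hMloc⟩ := canonical_product (SZ ∪ SP) n
    (fun s hs => hn0 s (fun h => hs (Or.inl h)) fun h => hs (Or.inr h))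
    (fun ρ hρ => hρ.elim (hZstrip ρ) (hPstrip ρ)) hacc
  obtain ⟨χ, H, hχ, hχv, hH, hζ⟩ := euler_extension A hA hA0
  set F : ℂ → ℂ := fun s => M s * cexp (H s) with hF
  have hHo : IsOpen {s : ℂ | 1 / 2 < s.re} := isOpen_lt continuous_const Complex.continuous_re
  have hloc : ∀ s : ℂ, 21 / 40 < s.re → ∃ g : ℂ → ℂ, AnalyticAt ℂ g s ∧ g s ≠ 0 ∧
      ∀ᶠ z in nhds s, F z = (z - s) ^ (n s) * g z := by
    intro s hs
    obtain ⟨g, hg, hgs, hev⟩ := hMloc s hs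
    have hs2 : {s : ℂ | 1 / 2 < s.re} ∈ nhds s :=
      hHo.mem_nhds (show 1 / 2 < s.re by linarith)
    refine ⟨fun z => g z * cexp (H z), hg.mul (hH.analyticAt hs2).cexp,
      mul_ne_zero hgs (Complex.exp_ne_zero _), ?_⟩
    filter_upwards [hev] with z hz
    simp only [hF, hz, mul_assoc]
  refine ⟨χ, F, hχ, hχv, ?_, ?_, ?_, ?_, ?_, ?_⟩
  · intro s hs
    obtain ⟨g, hg, -, hev⟩ := hloc s hs
    have h1 : MeromorphicAt (fun z => (z - s) ^ (n s) * g z) s :=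
      (((analyticAt_id.sub analyticAt_const).meromorphicAt).zpow _).mul hg.meromorphicAt
    exact h1.congr ((hev.filter_mono nhdsWithin_le_nhds).mono fun z hz => hz.symm)
  · intro s hs
    rw [hζ s hs, Complex.exp_add, ← hM s hs]
  · rintro s ⟨hs, hsP⟩
    obtain ⟨g, hg, -, hev⟩ := hloc s hs
    obtain ⟨k, hk⟩ : ∃ k : ℕ, n s = k := by
      by_cases h : s ∈ SZ
      · exact ⟨_, hnZ s h⟩
      · exact ⟨0, by simpa using hn0 s h hsP⟩
    have h1 : AnalyticAt ℂ (fun z => (z - s) ^ k * g z) s :=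
      ((analyticAt_id.sub analyticAt_const).pow k).mul hg
    refine h1.congr (hev.mono fun z hz => ?_)
    rw [hz, hk, zpow_natCast]
  · intro s hs hsP
    obtain ⟨g, hg, hgs, hev⟩ := hloc s hs
    rw [hev.self_of_nhds, sub_self]
    constructor
    · intro h
      by_contra hsZ
      rw [hn0 s hsZ hsP, zpow_zero, one_mul] at h
      exact hgs h
    · intro h
      have := hmZ s h
      rw [hnZ s h, zero_zpow _ (by omega), zero_mul]
  · intro s hs
    obtain ⟨g, hg, hgs, hev⟩ := hloc s (hZstrip s hs).1
    refine ⟨g, hg, hgs, hev.mono fun z hz => ?_⟩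
    rw [hz, hnZ s hs, zpow_natCast]
  · intro s hs
    obtain ⟨g, hg, hgs, hev⟩ := hloc s (hPstrip s hs).1
    refine ⟨g, hg, hgs, (hev.filter_mono nhdsWithin_le_nhds).mono fun z hz => ?_⟩
    rw [hz, hnP s hs]
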